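/- arXiv:1808.04199 — 2 statements merged into one kernel-verified Lean document; each statement's English description precedes it below -/
import Mathlib

section
/- For every n ≥ 3, the number of up-oriented permutations of length n with rev-tier 0 equals Catalan(n) − 2^{n−1}, where Catalan(n) is the n-th Catalan number. -/
/-!  Common definitions: permutation patterns, separated pairs, rev-tier. -/

/-- `π` contains the pattern `σ`. -/
def Pattern.Contains {n k : ℕ} (π : Equiv.Perm (Fin n)) (σ : Equiv.Perm (Fin k)) : Prop :=
  ∃ α : Fin k → Fin n, StrictMono α ∧ ∀ i j : Fin k, (π (α i) < π (α j) ↔ σ i < σ j)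

/-- `π` avoids the pattern `σ`. -/
def Pattern.Avoids {n k : ℕ} (π : Equiv.Perm (Fin n)) (σ : Equiv.Perm (Fin k)) : Prop :=
  ¬ Pattern.Contains π σ

/-- The pair of values `(a, a+1)` (0-indexed) is an up oriented separated pair in `σ`:
`a` precedes `a+1` and some value `> a+1` occurs strictly between them. -/
def UpSepPair {n : ℕ} (σ : Equiv.Perm (Fin n)) (a : Fin n) : Prop :=
  ∃ hb : (a : ℕ) + 1 < n,
    σ.symm a < σ.symm ⟨(a : ℕ) + 1, hb⟩ ∧
    ∃ p : Fin n, σ.symm a < p ∧ p < σ.symm ⟨(a : ℕ) + 1, hb⟩ ∧ (a : ℕ) + 1 < (σ p : ℕ)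

/-- The pair of values `(a, a+1)` (0-indexed) is a down oriented separated pair in `σ`. -/
def DownSepPair {n : ℕ} (σ : Equiv.Perm (Fin n)) (a : Fin n) : Prop :=
  ∃ hb : (a : ℕ) + 1 < n,
    σ.symm ⟨(a : ℕ) + 1, hb⟩ < σ.symm a ∧
    ∃ p : Fin n, σ.symm ⟨(a : ℕ) + 1, hb⟩ < p ∧ p < σ.symm a ∧ (a : ℕ) + 1 < (σ p : ℕ)

/-- `(a, a+1)` is a separated pair (of either orientation). -/
def SepPair {n : ℕ} (σ : Equiv.Perm (Fin n)) (a : Fin n) : Prop :=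
  UpSepPair σ a ∨ DownSepPair σ a

/-- `σ` has no separated pairs. -/
def NoSepPairs {n : ℕ} (σ : Equiv.Perm (Fin n)) : Prop :=
  ∀ a : Fin n, ¬ SepPair σ a

/-- `f` lists the lower values of an increasing sequence of separated pairs in `σ` with
alternating orientations; the first pair is down oriented iff `firstDown = true`. -/
def AltChain {n : ℕ} (σ : Equiv.Perm (Fin n)) (firstDown : Bool) {t : ℕ}
    (f : Fin t → Fin n) : Prop :=
  StrictMono f ∧ ∀ j : Fin t,
    if ((j : ℕ) % 2 = 0) ↔ (firstDown = true) then DownSepPair σ (f j)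
    else UpSepPair σ (f j)

/-- The rev-tier of `σ`: the maximal length of an increasing sequence of separated pairs
with alternating orientations beginning with a down oriented pair. -/
noncomputable def revTier {n : ℕ} (σ : Equiv.Perm (Fin n)) : ℕ :=
  sSup {t : ℕ | ∃ f : Fin t → Fin n, AltChain σ true f}

/-- Maximal length of an increasing alternating sequence of separated pairs (either
starting orientation). -/
noncomputable def maxAltLen {n : ℕ} (σ : Equiv.Perm (Fin n)) : ℕ :=
  sSup {t : ℕ | ∃ b : Bool, ∃ f : Fin t → Fin n, AltChain σ b f}

/-- `σ` has a separated pair and every maximum-length increasing alternating sequence of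
separated pairs begins with an up oriented pair. -/
def UpOriented {n : ℕ} (σ : Equiv.Perm (Fin n)) : Prop :=
  1 ≤ maxAltLen σ ∧ ¬ ∃ f : Fin (maxAltLen σ) → Fin n, AltChain σ true f

/-- `σ` has a separated pair and every maximum-length increasing alternating sequence of
separated pairs begins with a down oriented pair. -/
def DownOriented {n : ℕ} (σ : Equiv.Perm (Fin n)) : Prop :=
  1 ≤ maxAltLen σ ∧ ¬ ∃ f : Fin (maxAltLen σ) → Fin n, AltChain σ false f

/-- `σ` is a basis element of the class of permutations of rev-tier at most `t`. -/
def IsBasisElt (t : ℕ) {n : ℕ} (σ : Equiv.Perm (Fin n)) : Prop :=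
  t + 1 ≤ revTier σ ∧
  ∀ (m : ℕ) (τ : Equiv.Perm (Fin m)), m < n → Pattern.Contains σ τ → revTier τ ≤ t

/-- The entry `1` of `σ` is in (1-indexed) position `k`. -/
def onePos {n : ℕ} (σ : Equiv.Perm (Fin n)) (k : ℕ) : Prop :=
  ∀ h : 0 < n, (σ.symm ⟨0, h⟩ : ℕ) + 1 = k

/-- `η(n,k)`: number of permutations of length `n` with no separated pairs and entry `1`
in position `k`. -/
noncomputable def eta (n k : ℕ) : ℕ :=
  Nat.card {σ : Equiv.Perm (Fin n) // NoSepPairs σ ∧ onePos σ k}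

/-- `η(n)`: number of permutations of length `n` with no separated pairs. -/
noncomputable def etaTot (n : ℕ) : ℕ :=
  Nat.card {σ : Equiv.Perm (Fin n) // NoSepPairs σ}

/-- `μ_U(n,t,k)`: number of up-oriented permutations of length `n`, rev-tier `t`, with
entry `1` in position `k`. -/
noncomputable def muU (n t k : ℕ) : ℕ :=
  Nat.card {σ : Equiv.Perm (Fin n) // UpOriented σ ∧ revTier σ = t ∧ onePos σ k}

/-- `μ_D(n,t,k)`: number of down-oriented permutations of length `n`, rev-tier `t`, with
entry `1` in position `k`. -/
noncomputable def muD (n t k : ℕ) : ℕ :=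
  Nat.card {σ : Equiv.Perm (Fin n) // DownOriented σ ∧ revTier σ = t ∧ onePos σ k}

/-- `π` is a down-up alternating permutation: `π₁ > π₂ < π₃ > ⋯`. -/
def DownUp {n : ℕ} (π : Equiv.Perm (Fin n)) : Prop :=
  ∀ (i : ℕ) (h : i + 1 < n),
    if i % 2 = 0 then π ⟨i + 1, h⟩ < π ⟨i, by omega⟩
    else π ⟨i, by omega⟩ < π ⟨i + 1, h⟩

/-- The Entringer number `E_{n,k}`: down-up alternating permutations of length `n` whose
first entry is `k` (1-indexed value). -/
noncomputable def entringer (n k : ℕ) : ℕ :=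
  Nat.card {π : Equiv.Perm (Fin n) // DownUp π ∧ ∀ h : 0 < n, (π ⟨0, h⟩ : ℕ) + 1 = k}

/-- The reversal of a permutation: `(revP σ) j = σ (n + 1 - j)`. -/
def revP {n : ℕ} (σ : Equiv.Perm (Fin n)) : Equiv.Perm (Fin n) :=
  (Fin.revPerm).trans σ

/-- The explicit maximal rev-tier permutation of length `n` (0-indexed values):
the even entries of `{1,…,n}` in decreasing order, then `n`, then the odd entries in
increasing order. -/
def maxPermVal (n : ℕ) (i : Fin n) : Fin n :=
  if h1 : (i : ℕ) < (n - 1) / 2 then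
    ⟨2 * ((n - 1) / 2) - 2 * (i : ℕ) - 1, by omega⟩
  else if h2 : (i : ℕ) = (n - 1) / 2 then
    ⟨n - 1, by have := i.isLt; omega⟩
  else
    ⟨2 * ((i : ℕ) - (n - 1) / 2 - 1), by have := i.isLt; omega⟩

def p231 : Equiv.Perm (Fin 3) :=
  ⟨![1, 2, 0], ![2, 0, 1], by decide, by decide⟩

def p132 : Equiv.Perm (Fin 3) :=
  ⟨![0, 2, 1], ![0, 2, 1], by decide, by decide⟩

def p2413 : Equiv.Perm (Fin 4) :=
  ⟨![1, 3, 0, 2], ![2, 0, 3, 1], by decide, by decide⟩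

def p2431 : Equiv.Perm (Fin 4) :=
  ⟨![1, 3, 2, 0], ![3, 0, 2, 1], by decide, by decide⟩

def p23154 : Equiv.Perm (Fin 5) :=
  ⟨![1, 2, 0, 4, 3], ![2, 0, 1, 4, 3], by decide, by decide⟩

def p24153 : Equiv.Perm (Fin 5) :=
  ⟨![1, 3, 0, 4, 2], ![2, 0, 4, 1, 3], by decide, by decide⟩

def p24513 : Equiv.Perm (Fin 5) :=
  ⟨![1, 3, 4, 0, 2], ![3, 0, 4, 1, 2], by decide, by decide⟩

def p24531 : Equiv.Perm (Fin 5) :=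
  ⟨![1, 3, 4, 2, 0], ![4, 0, 3, 1, 2], by decide, by decide⟩

def p42513 : Equiv.Perm (Fin 5) :=
  ⟨![3, 1, 4, 0, 2], ![3, 1, 4, 0, 2], by decide, by decide⟩

def p42531 : Equiv.Perm (Fin 5) :=
  ⟨![3, 1, 4, 2, 0], ![4, 1, 3, 0, 2], by decide, by decide⟩

def p231564 : Equiv.Perm (Fin 6) :=
  ⟨![1, 2, 0, 4, 5, 3], ![2, 0, 1, 5, 3, 4], by decide, by decide⟩

def p261453 : Equiv.Perm (Fin 6) :=
  ⟨![1, 5, 0, 3, 4, 2], ![2, 0, 5, 3, 4, 1], by decide, by decide⟩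

def p523164 : Equiv.Perm (Fin 6) :=
  ⟨![4, 1, 2, 0, 5, 3], ![3, 1, 2, 5, 0, 4], by decide, by decide⟩

def p562413 : Equiv.Perm (Fin 6) :=
  ⟨![4, 5, 1, 3, 0, 2], ![4, 2, 5, 3, 0, 1], by decide, by decide⟩

def p562431 : Equiv.Perm (Fin 6) :=
  ⟨![4, 5, 1, 3, 2, 0], ![5, 2, 4, 3, 0, 1], by decide, by decide⟩

def p6723154 : Equiv.Perm (Fin 7) :=
  ⟨![5, 6, 1, 2, 0, 4, 3], ![4, 2, 3, 6, 5, 0, 1], by decide, by decide⟩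

def p4321 : Equiv.Perm (Fin 4) :=
  ⟨![3, 2, 1, 0], ![3, 2, 1, 0], by decide, by decide⟩

def p4213 : Equiv.Perm (Fin 4) :=
  ⟨![3, 1, 0, 2], ![2, 1, 3, 0], by decide, by decide⟩

/-!
A permutation has rev-tier 0 iff it has no down oriented separated pair, and it is then up-oriented
iff it has a separated pair at all, so the number sought is the number of permutations without down
oriented separated pairs minus the number without separated pairs.

Every permutation of length `n + 1` arises uniquely by inserting a new minimum at some position `p`
into a permutation of length `n`. Old separated pairs are kept. If the old minimum is at position
`k` (0-indexed), then the pair formed by the new and the old minimum is down oriented separated iff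
`k + 1 < p` and, by reversal, up oriented separated iff `p < k`. Hence a permutation without
separated pairs has exactly two extensions of the same kind, which gives `2 ^ (n - 1)`, whereas one
without down oriented separated pairs has the `k + 2` extensions `p = 0, …, k + 1`. The latter
permutations therefore form the Catalan generating tree, in which a node with `k` children has
children with `2, …, k + 1` children.
-/

/-! ### The Catalan generating tree -/

/-- The number of descendants at depth `m` of a node labelled `k` in the Catalan generating tree,
where a node labelled `k` has `k` children, labelled `2, …, k + 1`. -/
def catalanTreeCount : ℕ → ℕ → ℕ
  | 0, _ => 1
  | m + 1, k => ∑ j ∈ Finset.range k, catalanTreeCount m (j + 2)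

theorem catalanTreeCount_succ_succ (m k : ℕ) :
    catalanTreeCount (m + 1) (k + 1) =
      catalanTreeCount (m + 1) k + catalanTreeCount m (k + 2) := by
  simp only [catalanTreeCount, Finset.sum_range_succ]

theorem catalanTreeCount_succ_one (m : ℕ) :
    catalanTreeCount (m + 1) 1 = catalanTreeCount m 2 := by
  simp [catalanTreeCount]

theorem catalanTreeCount_add_choose (m k : ℕ) :
    catalanTreeCount (m + 1) k + (2 * m + k + 1).choose m = (2 * m + k + 1).choose (m + 1) := by
  induction m generalizing k with
  | zero => simp [catalanTreeCount]
  | succ m ihm =>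
    induction k with
    | zero =>
      have hsymm := Nat.choose_symm_half (m + 1)
      simpa [catalanTreeCount] using hsymm.symm
    | succ k ihk =>
      have hrec := catalanTreeCount_succ_succ (m + 1) k
      have hm := ihm (k + 2)
      have pascal := Nat.choose_succ_succ' (2 * m + k + 3) m
      have pascal' := Nat.choose_succ_succ' (2 * m + k + 3) (m + 1)
      ring_nf at hrec hm ihk pascal pascal' ⊢
      omega

theorem catalanTreeCount_one_right (m : ℕ) : catalanTreeCount m 1 = catalan m := by
  cases m with
  | zero => simp [catalanTreeCount]
  | succ m =>
    have hballot : catalanTreeCount (m + 1) 1 + (2 * m + 2).choose m = (2 * m + 2).choose (m + 1) :=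
      catalanTreeCount_add_choose m 1
    have hcatalan : (m + 2) * catalan (m + 1) = (2 * m + 2).choose (m + 1) :=
      succ_mul_catalan_eq_centralBinom (m + 1)
    have hchoose : (2 * m + 2).choose (m + 1) * (m + 1) = (2 * m + 2).choose m * (m + 2) := by
      rw [Nat.choose_succ_right_eq, show 2 * m + 2 - m = m + 2 by omega]
    have hmul : (m + 2) * catalanTreeCount (m + 1) 1 = (m + 2) * catalan (m + 1) := by
      linear_combination (m + 2) * hballot + hchoose - hcatalan
    exact Nat.eq_of_mul_eq_mul_left (Nat.succ_pos (m + 1)) hmul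

section SeparatedPairs

variable {n : ℕ} {σ : Equiv.Perm (Fin n)}

/-! ### Rev-tier zero -/

/-- `σ` has no down oriented separated pair. These are the permutations of rev-tier 0, that is,
those avoiding 231. -/
def NoDownSepPairs (σ : Equiv.Perm (Fin n)) : Prop :=
  ∀ a : Fin n, ¬ DownSepPair σ a

theorem NoSepPairs.noDownSepPairs (h : NoSepPairs σ) : NoDownSepPairs σ :=
  fun a ha => h a (Or.inr ha)

theorem noSepPairs_iff :
    NoSepPairs σ ↔ NoDownSepPairs σ ∧ ∀ a, ¬ UpSepPair σ a := by
  simp only [NoSepPairs, NoDownSepPairs, SepPair, not_or, forall_and, and_comm]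

theorem AltChain.length_le {t : ℕ} {b : Bool} {f : Fin t → Fin n} (h : AltChain σ b f) : t ≤ n := by
  simpa using Fintype.card_le_of_injective f h.1.injective

theorem altChain_elim0 (b : Bool) : AltChain σ b (Fin.elim0 : Fin 0 → Fin n) :=
  ⟨fun i => i.elim0, fun i => i.elim0⟩

theorem exists_pos_altChain_iff {b : Bool} :
    (∃ t, (∃ f : Fin t → Fin n, AltChain σ b f) ∧ 0 < t) ↔
      ∃ a, if b then DownSepPair σ a else UpSepPair σ a := by
  constructor
  · rintro ⟨t, ⟨f, -, hf⟩, ht⟩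
    exact ⟨f ⟨0, ht⟩, by simpa using hf ⟨0, ht⟩⟩
  · rintro ⟨a, ha⟩
    exact ⟨1, ⟨fun _ => a, Subsingleton.strictMono _, fun j => by simpa using ha⟩, one_pos⟩

theorem revTier_eq_zero_iff : revTier σ = 0 ↔ NoDownSepPairs σ := by
  have hpos : 0 < revTier σ ↔ ∃ a, DownSepPair σ a := by
    have hbdd : BddAbove {t | ∃ f : Fin t → Fin n, AltChain σ true f} :=
      ⟨n, fun t ⟨_, hf⟩ => hf.length_le⟩
    refine (lt_csSup_iff hbdd ⟨0, _, altChain_elim0 true⟩).trans ?_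
    simpa using exists_pos_altChain_iff (b := true)
  rw [← not_iff_not, ← Ne, ← Nat.pos_iff_ne_zero, hpos, NoDownSepPairs, not_forall_not]

theorem maxAltLen_pos_iff : 0 < maxAltLen σ ↔ ¬ NoSepPairs σ := by
  have hbdd : BddAbove {t | ∃ b, ∃ f : Fin t → Fin n, AltChain σ b f} :=
    ⟨n, fun t ⟨_, _, hf⟩ => hf.length_le⟩
  calc
    0 < maxAltLen σ ↔ ∃ t, (∃ b, ∃ f : Fin t → Fin n, AltChain σ b f) ∧ 0 < t :=
      lt_csSup_iff hbdd ⟨0, true, _, altChain_elim0 true⟩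
    _ ↔ ∃ b, ∃ t, (∃ f : Fin t → Fin n, AltChain σ b f) ∧ 0 < t := by
      simp only [← exists_and_right]
      exact exists_comm
    _ ↔ ¬ NoSepPairs σ := by
      simp only [exists_pos_altChain_iff, Bool.exists_bool, NoSepPairs, SepPair, not_forall_not,
        exists_or, if_true, Bool.false_eq_true, if_false]

theorem upOriented_and_revTier_eq_zero_iff :
    UpOriented σ ∧ revTier σ = 0 ↔ NoDownSepPairs σ ∧ ¬ NoSepPairs σ := by
  rw [revTier_eq_zero_iff, and_comm]
  refine and_congr_right fun hdown => ?_
  have no_chain (hlen : 0 < maxAltLen σ) :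
      ¬ ∃ f : Fin (maxAltLen σ) → Fin n, AltChain σ true f := fun hf => by
    obtain ⟨a, ha⟩ := exists_pos_altChain_iff.mp ⟨_, hf, hlen⟩
    exact hdown a (by simpa using ha)
  exact (and_iff_left_of_imp no_chain).trans maxAltLen_pos_iff

/-! ### Reversal -/

@[simp]
theorem revP_symm_apply (σ : Equiv.Perm (Fin n)) (a : Fin n) :
    (revP σ).symm a = (σ.symm a).rev := rfl

theorem downSepPair_revP {a : Fin n} : DownSepPair (revP σ) a ↔ UpSepPair σ a := by
  simp only [DownSepPair, UpSepPair, revP_symm_apply, Fin.rev_lt_rev]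
  refine exists_congr fun hb => and_congr_right fun _ => Fin.rev_surjective.exists.trans ?_
  simp only [Fin.rev_lt_rev, revP, Equiv.trans_apply, Fin.revPerm_apply, Fin.rev_rev]
  exact exists_congr fun p => and_left_comm

/-! ### Inserting a new minimum -/

theorem downSepPair_iff_exists_value {a : Fin n} :
    DownSepPair σ a ↔ ∃ b c : Fin n, (b : ℕ) = a + 1 ∧ b < c ∧
      σ.symm b < σ.symm c ∧ σ.symm c < σ.symm a := by
  constructor
  · rintro ⟨hb, -, p, hbp, hpa, hp⟩
    exact ⟨⟨a + 1, hb⟩, σ p, rfl, hp, by simpa using hbp, by simpa using hpa⟩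
  · rintro ⟨⟨b, hb⟩, c, rfl, hbc, hlt, hgt⟩
    exact ⟨hb, hlt.trans hgt, σ.symm c, hlt, hgt, by simpa [Fin.lt_def] using hbc⟩

/-- The permutation obtained from `σ` by increasing all values by one and inserting the new minimum
at position `p`. -/
def insertMin (p : Fin (n + 1)) (σ : Equiv.Perm (Fin n)) : Equiv.Perm (Fin (n + 1)) :=
  (finSuccEquiv' p).trans (σ.optionCongr.trans (finSuccEquiv n).symm)

@[simp]
theorem insertMin_symm_zero (p : Fin (n + 1)) (σ : Equiv.Perm (Fin n)) :
    (insertMin p σ).symm 0 = p := by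
  simp [insertMin, ← Equiv.optionCongr_symm]

@[simp]
theorem insertMin_symm_succ (p : Fin (n + 1)) (σ : Equiv.Perm (Fin n)) (a : Fin n) :
    (insertMin p σ).symm a.succ = p.succAbove (σ.symm a) := by
  simp [insertMin, ← Equiv.optionCongr_symm]

theorem insertMin_bijective (n : ℕ) :
    Function.Bijective fun x : Fin (n + 1) × Equiv.Perm (Fin n) => insertMin x.1 x.2 := by
  rw [Fintype.bijective_iff_injective_and_card]
  refine ⟨?_, by simp [Fintype.card_perm, Nat.factorial_succ]⟩
  rintro ⟨p, σ⟩ ⟨q, τ⟩ h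
  have hsymm (a : Fin (n + 1)) : (insertMin p σ).symm a = (insertMin q τ).symm a :=
    congrArg (fun π : Equiv.Perm (Fin (n + 1)) => π.symm a) h
  obtain rfl : p = q := by simpa using hsymm 0
  have hστ : σ.symm = τ.symm := Equiv.ext fun a => by simpa using hsymm a.succ
  rw [Equiv.symm_bijective.injective hστ]

theorem revP_insertMin (p : Fin (n + 1)) (σ : Equiv.Perm (Fin n)) :
    revP (insertMin p σ) = insertMin p.rev (revP σ) := by
  refine Equiv.symm_bijective.injective (Equiv.ext fun a => ?_)
  cases a using Fin.cases with
  | zero => simp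
  | succ a => simp [Fin.rev_succAbove]

theorem downSepPair_insertMin_succ (p : Fin (n + 1)) (σ : Equiv.Perm (Fin n)) (a : Fin n) :
    DownSepPair (insertMin p σ) a.succ ↔ DownSepPair σ a := by
  simp [downSepPair_iff_exists_value, Fin.exists_fin_succ]

theorem upSepPair_insertMin_succ (p : Fin (n + 1)) (σ : Equiv.Perm (Fin n)) (a : Fin n) :
    UpSepPair (insertMin p σ) a.succ ↔ UpSepPair σ a := by
  rw [← downSepPair_revP, revP_insertMin, downSepPair_insertMin_succ, downSepPair_revP]

theorem downSepPair_insertMin_zero (p : Fin (n + 2)) (σ : Equiv.Perm (Fin (n + 1))) :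
    DownSepPair (insertMin p σ) 0 ↔ (σ.symm 0).succ < p := by
  calc
    DownSepPair (insertMin p σ) 0
      ↔ ∃ c, 0 < c ∧ σ.symm 0 < σ.symm c ∧ (σ.symm c).castSucc < p := by
        simp [downSepPair_iff_exists_value, Fin.exists_fin_succ, Fin.succAbove_lt_iff_castSucc_lt]
    _ ↔ ∃ q, σ.symm 0 < q ∧ q.castSucc < p := by
        have hpos (c) (hc : σ.symm 0 < σ.symm c) : 0 < c :=
          Fin.pos_of_ne_zero fun h => hc.ne' (congrArg σ.symm h)
        refine Iff.trans (exists_congr fun c => ?_) σ.symm.surjective.exists.symm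
        exact and_iff_right_of_imp fun hc => hpos c hc.1
    _ ↔ (σ.symm 0).succ < p := by
        simp only [Fin.lt_def, Fin.val_castSucc, Fin.val_succ]
        exact ⟨fun ⟨q, _, _⟩ => by omega, fun h => ⟨⟨σ.symm 0 + 1, by omega⟩, by simp, h⟩⟩

theorem upSepPair_insertMin_zero (p : Fin (n + 2)) (σ : Equiv.Perm (Fin (n + 1))) :
    UpSepPair (insertMin p σ) 0 ↔ p < (σ.symm 0).castSucc := by
  rw [← downSepPair_revP, revP_insertMin, downSepPair_insertMin_zero, revP_symm_apply,
    ← Fin.rev_castSucc, Fin.rev_lt_rev]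

theorem noDownSepPairs_insertMin (p : Fin (n + 2)) (σ : Equiv.Perm (Fin (n + 1))) :
    NoDownSepPairs (insertMin p σ) ↔ NoDownSepPairs σ ∧ p ≤ (σ.symm 0).succ := by
  rw [NoDownSepPairs, Fin.forall_fin_succ, downSepPair_insertMin_zero, not_lt, and_comm]
  simp only [downSepPair_insertMin_succ, NoDownSepPairs]

theorem noSepPairs_insertMin (p : Fin (n + 2)) (σ : Equiv.Perm (Fin (n + 1))) :
    NoSepPairs (insertMin p σ) ↔
      NoSepPairs σ ∧ (p = (σ.symm 0).castSucc ∨ p = (σ.symm 0).succ) := by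
  have hadjacent : p = (σ.symm 0).castSucc ∨ p = (σ.symm 0).succ ↔
      p ≤ (σ.symm 0).succ ∧ (σ.symm 0).castSucc ≤ p := by
    simp only [Fin.ext_iff, Fin.le_def, Fin.val_castSucc, Fin.val_succ]
    omega
  rw [noSepPairs_iff, noSepPairs_iff, noDownSepPairs_insertMin, Fin.forall_fin_succ,
    upSepPair_insertMin_zero, not_lt, hadjacent]
  simp only [upSepPair_insertMin_succ]
  tauto

end SeparatedPairs

/-! ### Counting -/

theorem sum_filter_insertMin {n : ℕ} {M : Type*} [AddCommMonoid M]
    {P : Equiv.Perm (Fin (n + 1)) → Prop} {Q : Equiv.Perm (Fin n) → Prop}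
    {R : Equiv.Perm (Fin n) → Fin (n + 1) → Prop}
    [DecidablePred P] [DecidablePred Q] [∀ σ, DecidablePred (R σ)]
    (hP : ∀ p σ, P (insertMin p σ) ↔ Q σ ∧ R σ p) (F : Equiv.Perm (Fin (n + 1)) → M) :
    ∑ τ with P τ, F τ = ∑ σ with Q σ, ∑ p with R σ p, F (insertMin p σ) := by
  simp only [Finset.sum_filter]
  rw [← (insertMin_bijective n).sum_comp, Fintype.sum_prod_type_right]
  refine Finset.sum_congr rfl fun σ _ => ?_
  by_cases hσ : Q σ <;> simp [hP, hσ]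

theorem noSepPairs_of_fin_one (σ : Equiv.Perm (Fin 1)) : NoSepPairs σ := by
  rintro a (⟨hb, -⟩ | ⟨hb, -⟩) <;> omega

open Classical in
theorem sum_noDownSepPairs_succ {M : Type*} [AddCommMonoid M] (n : ℕ) (g : ℕ → M) :
    ∑ τ : Equiv.Perm (Fin (n + 2)) with NoDownSepPairs τ, g (τ.symm 0) =
      ∑ σ : Equiv.Perm (Fin (n + 1)) with NoDownSepPairs σ,
        ∑ j ∈ Finset.range (σ.symm 0 + 2), g j := by
  rw [sum_filter_insertMin noDownSepPairs_insertMin]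
  refine Finset.sum_congr rfl fun σ _ => ?_
  have hrange : (Finset.univ.filter (· ≤ (σ.symm 0).succ)).map Fin.valEmbedding =
      Finset.range (σ.symm 0 + 2) := by
    rw [Finset.filter_ge_eq_Iic, Fin.map_valEmbedding_Iic, Fin.val_succ, ← Nat.range_succ_eq_Iic]
  simp only [insertMin_symm_zero, ← hrange, Finset.sum_map, Fin.valEmbedding_apply]

open Classical in
theorem sum_noDownSepPairs_catalanTreeCount (n m : ℕ) :
    ∑ σ : Equiv.Perm (Fin (n + 1)) with NoDownSepPairs σ, catalanTreeCount m (σ.symm 0 + 2) =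
      catalanTreeCount (n + m) 2 := by
  induction n generalizing m with
  | zero => simp [(noSepPairs_of_fin_one _).noDownSepPairs]
  | succ n ih =>
    rw [sum_noDownSepPairs_succ n fun j => catalanTreeCount m (j + 2), Nat.add_right_comm n 1 m]
    exact ih (m + 1)

theorem card_noDownSepPairs (n : ℕ) :
    Nat.card {σ : Equiv.Perm (Fin (n + 1)) // NoDownSepPairs σ} = catalan (n + 1) := by
  classical
  calc
    Nat.card {σ : Equiv.Perm (Fin (n + 1)) // NoDownSepPairs σ}
      = ∑ σ : Equiv.Perm (Fin (n + 1)) with NoDownSepPairs σ,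
          catalanTreeCount 0 (σ.symm 0 + 2) := by
        simp [catalanTreeCount, Nat.card_eq_fintype_card, Fintype.card_subtype]
    _ = catalanTreeCount n 2 := sum_noDownSepPairs_catalanTreeCount n 0
    _ = catalan (n + 1) := by rw [← catalanTreeCount_succ_one, catalanTreeCount_one_right]

theorem etaTot_add_two (n : ℕ) : etaTot (n + 2) = 2 * etaTot (n + 1) := by
  classical
  simp only [etaTot, Nat.card_eq_fintype_card, Fintype.card_subtype, Finset.card_eq_sum_ones]
  rw [sum_filter_insertMin noSepPairs_insertMin, Finset.mul_sum]
  refine Finset.sum_congr rfl fun σ _ => ?_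
  rw [Finset.filter_or, Finset.filter_eq', Finset.filter_eq', if_pos (Finset.mem_univ _),
    if_pos (Finset.mem_univ _), ← Finset.card_eq_sum_ones, mul_one]
  exact Finset.card_pair (Fin.castSucc_lt_succ).ne

theorem etaTot_succ (n : ℕ) : etaTot (n + 1) = 2 ^ n := by
  induction n with
  | zero => simp [etaTot, noSepPairs_of_fin_one]
  | succ n ih => rw [etaTot_add_two, ih, pow_succ']

/-- for `n ≥ 3` the number of up-oriented permutations of length `n` with
rev-tier 0 is `catalan n - 2^(n-1)`. -/
theorem upOriented_tier_zero_count (n : ℕ) (hn : 3 ≤ n) :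
    Nat.card {σ : Equiv.Perm (Fin n) // UpOriented σ ∧ revTier σ = 0}
      = catalan n - 2 ^ (n - 1) := by
  obtain ⟨n, rfl⟩ : ∃ m, n = m + 1 := ⟨n - 1, by omega⟩
  let noDown : Set (Equiv.Perm (Fin (n + 1))) := {σ | NoDownSepPairs σ}
  let noSep : Set (Equiv.Perm (Fin (n + 1))) := {σ | NoSepPairs σ}
  calc
    Nat.card {σ : Equiv.Perm (Fin (n + 1)) // UpOriented σ ∧ revTier σ = 0}
      = (noDown \ noSep).ncard :=
        Nat.card_congr (Equiv.subtypeEquivRight fun _ => upOriented_and_revTier_eq_zero_iff)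
    _ = noDown.ncard - noSep.ncard :=
        Set.ncard_sdiff fun _ hσ => NoSepPairs.noDownSepPairs hσ
    _ = catalan (n + 1) - 2 ^ n := congrArg₂ _ (card_noDownSepPairs n) (etaTot_succ n)
end

section
/- For every n ≥ 1, the number of permutations of length n avoiding both 4321 and 4213 equals the number of permutations of length n avoiding all of 2413, 2431, and 23154; that is, the permutation classes Av(4321, 4213) and Av(2413, 2431, 23154) are Wilf equivalent. -/
/-!
Both classes are closed under deleting the first entry, so each is generated as a tree by inserting
a new first entry `v`, raising the values from `v` on. Which `v` are allowed, and what the result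
looks like, depends on finitely many parameters only. In `Av(4321, 4213)` the entry `v` is allowed
if and only if the values below `v` contain neither 321 nor 213. In `Av(2413, 2431, 23154)` it is
allowed if and only if the values from `v` on are increasing or those below `v` all precede them.

A family of power series `W` on the labels with `W ℓ = 1 + X * ∑ W ℓ'`, the sum running over the
children `ℓ'` of `ℓ`, must count descendants. For both trees such a family can be written down, and
both roots get the series `1 / (1 - X * L)`, where `L = C(X * C(X))` and `C` is the generating
function of the Catalan numbers.
-/

namespace Wilf

open Finset PowerSeries

variable {n : ℕ}

/-! ### Precedence of values and new first entries -/

/-- The value `a` stands to the left of the value `b` in the one-line notation of `π`. Values are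
natural numbers, and `a, b < n` is part of the relation. -/
def Before (π : Equiv.Perm (Fin n)) (a b : ℕ) : Prop :=
  ∃ (ha : a < n) (hb : b < n), π.symm ⟨a, ha⟩ < π.symm ⟨b, hb⟩

/-- The new name of the old value `x` when `v` is inserted: the values from `v` on go up by one. -/
def raise (v x : ℕ) : ℕ := if x < v then x else x + 1

/-- The permutation with first entry `v` whose remaining entries are in the same relative order
as `π`. Only `v ≤ n` is meaningful; larger `v` are reduced modulo `n + 1`. -/
def prepend (π : Equiv.Perm (Fin n)) (v : ℕ) : Equiv.Perm (Fin (n + 1)) :=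
  ((finSuccEquiv' 0).trans (Equiv.optionCongr π)).trans (finSuccEquiv' (Fin.ofNat (n + 1) v)).symm

section Before

variable {π : Equiv.Perm (Fin n)} {a b c : ℕ}

theorem before_apply_iff {i j : Fin n} : Before π (π i) (π j) ↔ i < j := by
  simp [Before]

theorem Before.left_lt (h : Before π a b) : a < n := h.1

theorem Before.right_lt (h : Before π a b) : b < n := h.2.1

theorem Before.trans (hab : Before π a b) (hbc : Before π b c) : Before π a c :=
  ⟨hab.left_lt, hbc.right_lt, hab.2.2.trans hbc.2.2⟩

theorem not_before_self : ¬ Before π a a := fun h => lt_irrefl _ h.2.2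

theorem Before.not_before (hab : Before π a b) : ¬ Before π b a :=
  fun hba => not_before_self (hab.trans hba)

theorem Before.ne (hab : Before π a b) : a ≠ b := by
  rintro rfl
  exact not_before_self hab

theorem before_or_before (ha : a < n) (hb : b < n) (hab : a ≠ b) : Before π a b ∨ Before π b a := by
  have hne : π.symm ⟨a, ha⟩ ≠ π.symm ⟨b, hb⟩ := by simpa using hab
  exact hne.lt_or_gt.imp (⟨ha, hb, ·⟩) (⟨hb, ha, ·⟩)

end Before

section Raise

variable {v x : ℕ}

theorem raise_of_lt (h : x < v) : raise v x = x := if_pos h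

theorem raise_of_le (h : v ≤ x) : raise v x = x + 1 := if_neg h.not_gt

theorem raise_strictMono (v : ℕ) : StrictMono (raise v) := fun x y h => by
  unfold raise; split_ifs <;> omega

theorem raise_ne (v x : ℕ) : raise v x ≠ v := by
  unfold raise; split_ifs <;> omega

theorem raise_lt_iff : raise v x < v ↔ x < v := by
  unfold raise; split_ifs <;> omega

theorem lt_raise_iff : v < raise v x ↔ v ≤ x := by
  unfold raise; split_ifs <;> omega

theorem raise_lt_succ_iff {h : ℕ} (hv : v ≤ h) : raise v x < h + 1 ↔ x < h := by
  unfold raise; split_ifs <;> omega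

end Raise

section Prepend

variable {π : Equiv.Perm (Fin n)} {v x y a b : ℕ}

theorem prepend_zero_val (hv : v ≤ n) : (prepend π v 0 : ℕ) = v := by
  simp [prepend, Nat.mod_eq_of_lt (Nat.lt_succ_of_le hv)]

theorem prepend_succ_val (hv : v ≤ n) (i : Fin n) : (prepend π v i.succ : ℕ) = raise v (π i) := by
  simp only [prepend, raise, Equiv.trans_apply, finSuccEquiv'_zero, finSuccEquiv_succ,
    Equiv.optionCongr_apply, Option.map_some, finSuccEquiv'_symm_some, Fin.succAbove, Fin.lt_def,
    Fin.val_castSucc, Fin.val_ofNat, Nat.mod_eq_of_lt (Nat.lt_succ_of_le hv)]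
  split_ifs <;> rfl

theorem prepend_injective {ρ : Equiv.Perm (Fin n)} {w : ℕ} (hv : v ≤ n) (hw : w ≤ n)
    (h : prepend π v = prepend ρ w) : π = ρ ∧ v = w := by
  obtain rfl : v = w := by rw [← prepend_zero_val (π := π) hv, h, prepend_zero_val hw]
  refine ⟨Equiv.ext fun i => Fin.ext ((raise_strictMono v).injective ?_), rfl⟩
  rw [← prepend_succ_val hv, h, prepend_succ_val hv]

theorem exists_prepend_eq (τ : Equiv.Perm (Fin (n + 1))) : ∃ π, ∃ v ≤ n, prepend π v = τ := by
  have hinj : Function.Injective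
      fun p : Equiv.Perm (Fin n) × Fin (n + 1) => prepend p.1 (p.2 : ℕ) := fun p q h =>
    have hpq := prepend_injective (Fin.is_le _) (Fin.is_le _) h
    Prod.ext hpq.1 (Fin.ext hpq.2)
  have hbij := (Fintype.bijective_iff_injective_and_card _).2
    ⟨hinj, by simp [Fintype.card_perm, Nat.factorial_succ, mul_comm]⟩
  obtain ⟨⟨π, v⟩, h⟩ := hbij.2 τ
  exact ⟨π, v, v.is_le, h⟩

theorem before_prepend_self (hv : v ≤ n) (hx : x ≤ n) (hxv : x ≠ v) : Before (prepend π v) v x := by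
  have hlt : 0 < (prepend π v).symm ⟨x, by omega⟩ := by
    rw [Fin.pos_iff_ne_zero, Ne, Equiv.symm_apply_eq, Fin.ext_iff, prepend_zero_val hv]
    exact hxv
  have h := (before_apply_iff (π := prepend π v)).2 hlt
  rwa [prepend_zero_val hv, Equiv.apply_symm_apply] at h

theorem before_prepend_raise (hv : v ≤ n) :
    Before (prepend π v) (raise v a) (raise v b) ↔ Before π a b := by
  by_cases hab : a < n ∧ b < n
  · obtain ⟨i, hi⟩ := π.surjective ⟨a, hab.1⟩
    obtain ⟨j, hj⟩ := π.surjective ⟨b, hab.2⟩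
    obtain rfl : (π i : ℕ) = a := by rw [hi]
    obtain rfl : (π j : ℕ) = b := by rw [hj]
    rw [← prepend_succ_val hv, ← prepend_succ_val hv, before_apply_iff, before_apply_iff,
      Fin.succ_lt_succ_iff]
  · refine iff_of_false (fun h => hab ?_) fun h => hab ⟨h.left_lt, h.right_lt⟩
    rw [← raise_lt_succ_iff hv, ← raise_lt_succ_iff hv]
    exact ⟨h.left_lt, h.right_lt⟩

theorem before_prepend_of_lt (hv : v ≤ n) (ha : a < v) (hb : b < v) :
    Before (prepend π v) a b ↔ Before π a b := by
  rw [← before_prepend_raise hv, raise_of_lt ha, raise_of_lt hb]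

theorem exists_raise_eq (hx : x ≠ v) : ∃ a, raise v a = x := by
  rcases hx.lt_or_gt with h | h
  · exact ⟨x, raise_of_lt h⟩
  · exact ⟨x - 1, (raise_of_le (by omega)).trans (by omega)⟩

theorem Before.exists_of_prepend (hv : v ≤ n) (h : Before (prepend π v) x y) :
    x = v ∨ ∃ a b, Before π a b ∧ raise v a = x ∧ raise v b = y := by
  refine or_iff_not_imp_left.2 fun hxv => ?_
  have hyv : y ≠ v := by
    rintro rfl
    exact h.not_before (before_prepend_self hv (Nat.le_of_lt_succ h.left_lt) hxv)
  obtain ⟨a, rfl⟩ := exists_raise_eq hxv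
  obtain ⟨b, rfl⟩ := exists_raise_eq hyv
  exact ⟨a, b, (before_prepend_raise hv).1 h, rfl, rfl⟩

end Prepend

section Patterns

variable {k : ℕ} {π : Equiv.Perm (Fin n)} {v : ℕ}

/-- A new first entry `v` in front of `π` plays the role of the first entry of `σ` in an occurrence
of `σ` in `prepend π v`. -/
def CompletesPattern (π : Equiv.Perm (Fin n)) (v : ℕ) (σ : Equiv.Perm (Fin (k + 1))) : Prop :=
  ∃ α : Fin k → Fin n, StrictMono α ∧
    (∀ i j, π (α i) < π (α j) ↔ σ i.succ < σ j.succ) ∧ ∀ i, (π (α i) : ℕ) < v ↔ σ i.succ < σ 0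

theorem prepend_succ_lt_succ_iff (hv : v ≤ n) {i j : Fin n} :
    prepend π v i.succ < prepend π v j.succ ↔ π i < π j := by
  rw [Fin.lt_def, prepend_succ_val hv, prepend_succ_val hv, (raise_strictMono v).lt_iff_lt,
    Fin.lt_def]

theorem prepend_succ_lt_zero_iff (hv : v ≤ n) {i : Fin n} :
    prepend π v i.succ < prepend π v 0 ↔ (π i : ℕ) < v := by
  rw [Fin.lt_def, prepend_succ_val hv, prepend_zero_val hv, raise_lt_iff]

theorem prepend_zero_lt_succ_iff (hv : v ≤ n) {i : Fin n} :
    prepend π v 0 < prepend π v i.succ ↔ ¬ (π i : ℕ) < v := by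
  rw [Fin.lt_def, prepend_succ_val hv, prepend_zero_val hv, lt_raise_iff, not_lt]

theorem exists_succ_comp_eq {α : Fin k → Fin (n + 1)} (hα : StrictMono α) (hpos : ∀ i, 0 < α i) :
    ∃ β : Fin k → Fin n, StrictMono β ∧ ∀ i, α i = (β i).succ := by
  choose β hβ using fun i => Fin.exists_succ_eq.2 (hpos i).ne'
  refine ⟨β, fun i j hij => ?_, fun i => (hβ i).symm⟩
  rw [← Fin.succ_lt_succ_iff, hβ, hβ]
  exact hα hij

theorem contains_prepend_iff (hv : v ≤ n) {σ : Equiv.Perm (Fin (k + 1))} :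
    Pattern.Contains (prepend π v) σ ↔ Pattern.Contains π σ ∨ CompletesPattern π v σ := by
  constructor
  · rintro ⟨α, hα, hpat⟩
    rcases (Fin.zero_le (α 0)).eq_or_lt with h0 | h0
    · obtain ⟨β, hβ, hαβ⟩ := exists_succ_comp_eq (hα.comp (Fin.strictMono_succ))
        fun i => h0 ▸ hα (Fin.succ_pos i)
      refine Or.inr ⟨β, hβ, fun i j => ?_, fun i => ?_⟩
      · rw [← hpat, ← prepend_succ_lt_succ_iff hv, ← hαβ, ← hαβ]
        rfl
      · rw [← hpat, ← prepend_succ_lt_zero_iff hv, ← hαβ, ← h0]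
        rfl
    · obtain ⟨β, hβ, hαβ⟩ := exists_succ_comp_eq hα
        fun i => h0.trans_le (hα.monotone (Fin.zero_le i))
      refine Or.inl ⟨β, hβ, fun i j => ?_⟩
      rw [← hpat, ← prepend_succ_lt_succ_iff hv, hαβ, hαβ]
  · rintro (⟨α, hα, hpat⟩ | ⟨α, hα, hpat, hfirst⟩)
    · refine ⟨fun i => (α i).succ, Fin.strictMono_succ.comp hα, fun i j => ?_⟩
      rw [prepend_succ_lt_succ_iff hv, hpat]
    · refine ⟨Fin.cons 0 fun i => (α i).succ, fun i j hij => ?_, fun i j => ?_⟩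
      · cases j using Fin.cases with
        | zero => exact absurd hij (Fin.not_lt_zero i)
        | succ j =>
          cases i using Fin.cases with
          | zero => exact Fin.succ_pos _
          | succ i => exact Fin.succ_lt_succ_iff.2 (hα (Fin.succ_lt_succ_iff.1 hij))
      · have hne (i : Fin k) : σ i.succ ≠ σ 0 := σ.injective.ne (Fin.succ_ne_zero i)
        cases i using Fin.cases <;> cases j using Fin.cases <;>
          simp [hpat, hfirst, prepend_succ_lt_succ_iff hv, prepend_succ_lt_zero_iff hv,
            prepend_zero_lt_succ_iff hv, (hne _).symm.le_iff_lt]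

theorem avoids_prepend_iff (hv : v ≤ n) {σ : Equiv.Perm (Fin (k + 1))} :
    Pattern.Avoids (prepend π v) σ ↔ Pattern.Avoids π σ ∧ ¬ CompletesPattern π v σ := by
  rw [Pattern.Avoids, contains_prepend_iff hv, not_or, Pattern.Avoids]

theorem completesPattern_iff_before {σ : Equiv.Perm (Fin (k + 3))} :
    CompletesPattern π v σ ↔ ∃ a : Fin (k + 2) → ℕ,
      (∀ i : Fin (k + 1), Before π (a i.castSucc) (a i.succ)) ∧
      (∀ i j, a i < a j ↔ σ i.succ < σ j.succ) ∧ ∀ i, a i < v ↔ σ i.succ < σ 0 := by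
  constructor
  · rintro ⟨α, hα, hpat, hfirst⟩
    exact ⟨fun i => π (α i), fun i => before_apply_iff.2 (hα i.castSucc_lt_succ), hpat, hfirst⟩
  · rintro ⟨a, hbefore, hpat, hfirst⟩
    have ha : ∀ i, a i < n := Fin.cases (hbefore 0).left_lt fun i => (hbefore i).right_lt
    refine ⟨fun i => π.symm ⟨a i, ha i⟩, ?_, fun i j => ?_, fun i => ?_⟩
    · exact Fin.strictMono_iff_lt_succ.2 fun i => (hbefore i).2.2
    · simpa using hpat i j
    · simpa using hfirst i

theorem completesPattern_p4321_iff : CompletesPattern π v p4321 ↔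
    ∃ a b c, Before π a b ∧ Before π b c ∧ c < b ∧ b < a ∧ a < v := by
  rw [completesPattern_iff_before]
  constructor
  · rintro ⟨a, hbefore, hpat, hfirst⟩
    exact ⟨_, _, _, hbefore 0, hbefore 1, (hpat 2 1).2 (by decide), (hpat 1 0).2 (by decide),
      (hfirst 0).2 (by decide)⟩
  · rintro ⟨a, b, c, hab, hbc, h⟩
    refine ⟨![a, b, c], ?_, ?_, ?_⟩ <;> simp [Fin.forall_fin_succ, p4321] <;> grind

theorem completesPattern_p4213_iff : CompletesPattern π v p4213 ↔
    ∃ a b c, Before π a b ∧ Before π b c ∧ b < a ∧ a < c ∧ c < v := by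
  rw [completesPattern_iff_before]
  constructor
  · rintro ⟨a, hbefore, hpat, hfirst⟩
    exact ⟨_, _, _, hbefore 0, hbefore 1, (hpat 1 0).2 (by decide), (hpat 0 2).2 (by decide),
      (hfirst 2).2 (by decide)⟩
  · rintro ⟨a, b, c, hab, hbc, h⟩
    refine ⟨![a, b, c], ?_, ?_, ?_⟩ <;> simp [Fin.forall_fin_succ, p4213] <;> grind

theorem completesPattern_p2413_iff : CompletesPattern π v p2413 ↔
    ∃ a b c, Before π a b ∧ Before π b c ∧ b < v ∧ v ≤ c ∧ c < a := by
  rw [completesPattern_iff_before]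
  constructor
  · rintro ⟨a, hbefore, hpat, hfirst⟩
    exact ⟨_, _, _, hbefore 0, hbefore 1, (hfirst 1).2 (by decide),
      not_lt.1 ((hfirst 2).not.2 (by decide)), (hpat 2 0).2 (by decide)⟩
  · rintro ⟨a, b, c, hab, hbc, h⟩
    refine ⟨![a, b, c], ?_, ?_, ?_⟩ <;> simp [Fin.forall_fin_succ, p2413] <;> grind

theorem completesPattern_p2431_iff : CompletesPattern π v p2431 ↔
    ∃ a b c, Before π a b ∧ Before π b c ∧ c < v ∧ v ≤ b ∧ b < a := by
  rw [completesPattern_iff_before]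
  constructor
  · rintro ⟨a, hbefore, hpat, hfirst⟩
    exact ⟨_, _, _, hbefore 0, hbefore 1, (hfirst 2).2 (by decide),
      not_lt.1 ((hfirst 1).not.2 (by decide)), (hpat 1 0).2 (by decide)⟩
  · rintro ⟨a, b, c, hab, hbc, h⟩
    refine ⟨![a, b, c], ?_, ?_, ?_⟩ <;> simp [Fin.forall_fin_succ, p2431] <;> grind

theorem completesPattern_p23154_iff : CompletesPattern π v p23154 ↔
    ∃ a b c d, Before π a b ∧ Before π b c ∧ Before π c d ∧ b < v ∧ v ≤ a ∧ a < d ∧ d < c := by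
  rw [completesPattern_iff_before]
  constructor
  · rintro ⟨a, hbefore, hpat, hfirst⟩
    exact ⟨_, _, _, _, hbefore 0, hbefore 1, hbefore 2, (hfirst 1).2 (by decide),
      not_lt.1 ((hfirst 0).not.2 (by decide)), (hpat 0 3).2 (by decide), (hpat 3 2).2 (by decide)⟩
  · rintro ⟨a, b, c, d, hab, hbc, hcd, h⟩
    refine ⟨![a, b, c, d], ?_, ?_, ?_⟩ <;> simp [Fin.forall_fin_succ, p23154] <;> grind

end Patterns

/-! ### Generating trees and their weights -/

theorem rel_map_range {α β : Type*} {r : α → β → Prop} {f : ℕ → α} {g : ℕ → β} {k : ℕ}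
    (h : ∀ j < k, r (f j) (g j)) :
    Multiset.Rel r ((Multiset.range k).map f) ((Multiset.range k).map g) := by
  rw [Multiset.rel_map]
  exact Multiset.rel_refl_of_refl_on fun j hj => h j (Multiset.mem_range.1 hj)

theorem map_range_succ {α : Type*} (f : ℕ → α) (k : ℕ) :
    (Multiset.range (k + 1)).map f = {f 0} + (Multiset.range k).map (fun j => f (j + 1)) := by
  rw [add_comm k, Multiset.range_add]
  simp [add_comm]

theorem map_range_add {α : Type*} (f : ℕ → α) (k l : ℕ) :
    (Multiset.range (k + l)).map f =
      (Multiset.range k).map f + (Multiset.range l).map (fun j => f (k + j)) := by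
  rw [Multiset.range_add, Multiset.map_add, Multiset.map_map]
  rfl

section GeneratingTree

variable {P : ∀ ⦃n : ℕ⦄, Equiv.Perm (Fin n) → Prop} {Label : Type*}
  {children : Label → Multiset Label}
  {State : Label → ∀ ⦃n : ℕ⦄, Equiv.Perm (Fin n) → Prop}

open Classical in
/-- The permutations of length `n` in the class `P`. -/
noncomputable def members (P : ∀ ⦃n : ℕ⦄, Equiv.Perm (Fin n) → Prop) (n : ℕ) :
    Finset (Equiv.Perm (Fin n)) :=
  univ.filter (P (n := n))

open Classical in
/-- The children of `π` in the generating tree of the class `P`: its members obtained from `π` by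
adding a first entry. -/
noncomputable def childPerms (P : ∀ ⦃n : ℕ⦄, Equiv.Perm (Fin n) → Prop) (π : Equiv.Perm (Fin n)) :
    Multiset (Equiv.Perm (Fin (n + 1))) :=
  ((Multiset.range (n + 1)).filter fun v => P (prepend π v)).map (prepend π)

/-- The labels of the `n`-th generation of descendants of `s` under the succession rule
`children`. -/
def generation (children : Label → Multiset Label) (n : ℕ) (s : Multiset Label) : Multiset Label :=
  (fun t => t.bind children)^[n] s

/-- The generating tree of the class `P` is described by the succession rule `children`, where
`State ℓ π` says that `π` carries the label `ℓ`. -/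
structure FollowsRule (P : ∀ ⦃n : ℕ⦄, Equiv.Perm (Fin n) → Prop)
    (State : Label → ∀ ⦃n : ℕ⦄, Equiv.Perm (Fin n) → Prop) (children : Label → Multiset Label)
    (root : Label) : Prop where
  empty_mem (π : Equiv.Perm (Fin 0)) : P π
  empty_state (π : Equiv.Perm (Fin 0)) : State root π
  tail_mem {n : ℕ} {π : Equiv.Perm (Fin n)} {v : ℕ} : v ≤ n → P (prepend π v) → P π
  step {n : ℕ} {π : Equiv.Perm (Fin n)} {ℓ : Label} : P π → State ℓ π →
    Multiset.Rel (fun τ ℓ' => State ℓ' τ) (childPerms P π) (children ℓ)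

/-- `W ℓ` has the properties of the generating function counting the descendants of a node with
label `ℓ` by their distance from it. -/
def IsWeight (children : Label → Multiset Label) (W : Label → ℤ⟦X⟧) : Prop :=
  ∀ ℓ, W ℓ = 1 + X * ((children ℓ).map W).sum

theorem mem_members {π : Equiv.Perm (Fin n)} : π ∈ members P n ↔ P π := by
  simp [members]

theorem mem_childPerms {π : Equiv.Perm (Fin n)} {τ : Equiv.Perm (Fin (n + 1))} :
    τ ∈ childPerms P π ↔ ∃ v ≤ n, P (prepend π v) ∧ prepend π v = τ := by
  simp only [childPerms, Multiset.mem_map, Multiset.mem_filter, Multiset.mem_range,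
    Nat.lt_succ_iff, and_assoc]

theorem childPerms_eq {π : Equiv.Perm (Fin n)} {S : Finset ℕ}
    (hS : ∀ v, v ∈ S ↔ v ≤ n ∧ P (prepend π v)) : childPerms P π = S.val.map (prepend π) := by
  classical
  have hfilter : S = (range (n + 1)).filter fun v => P (prepend π v) := by
    ext v
    rw [hS, mem_filter, mem_range, Nat.lt_succ_iff]
  rw [hfilter, filter_val, range_val, childPerms]

theorem nodup_childPerms {π : Equiv.Perm (Fin n)} : (childPerms P π).Nodup := by
  classical
  refine ((Multiset.nodup_range _).filter _).map_on fun v hv w hw h => ?_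
  simp only [Multiset.mem_filter, Multiset.mem_range, Nat.lt_succ_iff] at hv hw
  exact (prepend_injective hv.1 hw.1 h).2

theorem members_succ
    (tail_mem : ∀ {n : ℕ} {π : Equiv.Perm (Fin n)} {v : ℕ}, v ≤ n → P (prepend π v) → P π) :
    (members P (n + 1)).val = (members P n).val.bind (childPerms P) := by
  have hnodup : ((members P n).val.bind (childPerms P)).Nodup := by
    refine Multiset.nodup_bind.2 ⟨fun _ _ => nodup_childPerms,
      (members P n).nodup.pairwise fun π _ ρ _ hne => ?_⟩
    refine Multiset.disjoint_left.2 fun {τ} hπ hρ => ?_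
    obtain ⟨v, hv, -, rfl⟩ := mem_childPerms.1 hπ
    obtain ⟨w, hw, -, h⟩ := mem_childPerms.1 hρ
    exact hne (prepend_injective hw hv h).1.symm
  refine ((members P (n + 1)).nodup.ext hnodup).2 fun τ => ?_
  simp only [Finset.mem_val, mem_members, Multiset.mem_bind, mem_childPerms]
  constructor
  · intro hτ
    obtain ⟨π, v, hv, rfl⟩ := exists_prepend_eq τ
    exact ⟨π, tail_mem hv hτ, v, hv, hτ, rfl⟩
  · rintro ⟨π, -, v, -, hP, rfl⟩
    exact hP

theorem generation_succ (n : ℕ) (s : Multiset Label) :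
    generation children (n + 1) s = (generation children n s).bind children :=
  Function.iterate_succ_apply' _ _ _

theorem FollowsRule.rel_members {root : Label} (h : FollowsRule P State children root) (n : ℕ) :
    Multiset.Rel (fun π ℓ => State ℓ π) (members P n).val (generation children n {root}) := by
  induction n with
  | zero =>
    have hmem : members P 0 = {1} := by
      ext π
      simp [mem_members, h.empty_mem, Subsingleton.elim π 1]
    rw [hmem]
    exact .cons (h.empty_state 1) .zero
  | succ n ih =>
    rw [members_succ h.tail_mem, generation_succ]
    have ih' : Multiset.Rel (fun π ℓ => P π ∧ State ℓ π) (members P n).val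
        (generation children n {root}) :=
      ih.mono fun π hπ ℓ _ hs => ⟨mem_members.1 hπ, hs⟩
    exact Multiset.rel_bind (fun π ℓ hπ => h.step hπ.1 hπ.2) ih'

theorem IsWeight.sum_map {W : Label → ℤ⟦X⟧} (hW : IsWeight children W) (s : Multiset Label) :
    (s.map W).sum = s.card • 1 + X * ((s.bind children).map W).sum := by
  rw [Multiset.map_congr rfl fun ℓ _ => hW ℓ, Multiset.sum_map_add, Multiset.sum_map_mul_left,
    Multiset.map_bind, Multiset.sum_bind, Multiset.map_const', Multiset.sum_replicate]

theorem IsWeight.card_generation {W : Label → ℤ⟦X⟧} (hW : IsWeight children W) (n : ℕ)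
    (s : Multiset Label) :
    ((generation children n s).card : ℤ) = coeff n (s.map W).sum := by
  induction n generalizing s with
  | zero => simp [hW.sum_map s, generation]
  | succ n ih =>
    rw [hW.sum_map s, map_add, map_nsmul, coeff_one, if_neg n.succ_ne_zero, smul_zero, zero_add,
      coeff_succ_X_mul, ← ih]
    rfl

theorem FollowsRule.card_eq_coeff {root : Label} (h : FollowsRule P State children root)
    {W : Label → ℤ⟦X⟧} (hW : IsWeight children W) (n : ℕ) :
    (Nat.card {π : Equiv.Perm (Fin n) // P π} : ℤ) = coeff n (W root) := by
  classical
  have hcard : Nat.card {π : Equiv.Perm (Fin n) // P π} = (members P n).card :=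
    Nat.subtype_card _ fun _ => mem_members
  rw [hcard, Finset.card_def, Multiset.card_eq_card_of_rel (h.rel_members n),
    hW.card_generation, Multiset.map_singleton, Multiset.sum_singleton]

end GeneratingTree

/-! ### The generating functions -/

/-- The generating function of the Catalan numbers. -/
noncomputable def catalanGF : ℤ⟦X⟧ := catalanSeries.map (Nat.castRingHom ℤ)

local notation "𝐂" => catalanGF

/-- The Catalan generating function substituted into itself: `L = 𝐂(X 𝐂(X))`. -/
noncomputable def iteratedCatalanGF : ℤ⟦X⟧ := catalanGF.subst (X * catalanGF)

local notation "𝐋" => iteratedCatalanGF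

/-- The power series `1 / (1 - X * f)`. -/
noncomputable def geometricGF (f : ℤ⟦X⟧) : ℤ⟦X⟧ := invOfUnit (1 - X * f) 1

/-- The common generating function of the two classes, `1 / (1 - X * L)`. -/
noncomputable def classGF : ℤ⟦X⟧ := geometricGF iteratedCatalanGF

local notation "𝐠" => classGF

/-- The contribution of one value on top of the initial run to the weights of the first tree. -/
noncomputable def topGF : ℤ⟦X⟧ := geometricGF classGF

local notation "𝐫" => topGF

/-- The contribution to the weights of the first tree of `d` values that lie on top of the initial
run and stand in front of it. -/
noncomputable def frontGF : ℕ → ℤ⟦X⟧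
  | 0 => 1
  | d + 1 => catalanGF * frontGF d + (catalanGF - 1) * (iteratedCatalanGF - 1) * topGF ^ d

theorem catalanGF_eq : 𝐂 = 1 + X * 𝐂 ^ 2 := by
  have h := congrArg (map (Nat.castRingHom ℤ)) catalanSeries_sq_mul_X_add_one
  simp only [map_add, map_mul, map_pow, map_X, map_one] at h
  rw [← catalanGF] at h
  linear_combination -h

theorem iteratedCatalanGF_eq : 𝐋 = 1 + X * 𝐂 * 𝐋 ^ 2 := by
  have hs : HasSubst (X * 𝐂 : ℤ⟦X⟧) := HasSubst.of_constantCoeff_zero' (by simp)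
  have h := congrArg (substAlgHom hs) catalanGF_eq
  simp only [map_add, map_mul, map_one, map_pow, substAlgHom_X] at h
  rw [coe_substAlgHom hs] at h
  exact h

theorem geometricGF_mul (f : ℤ⟦X⟧) : geometricGF f * (1 - X * f) = 1 := by
  rw [mul_comm]
  exact mul_invOfUnit _ _ (by simp)

theorem classGF_mul : 𝐠 * (1 - X * 𝐋) = 1 := geometricGF_mul _

theorem topGF_mul : 𝐫 * (1 - X * 𝐠) = 1 := geometricGF_mul _

theorem mul_sum_pow_add_two {R : Type*} [CommRing R] {y Z : R} (h : Z = 1 + y * Z ^ 2) (m : ℕ) :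
    y * ∑ j ∈ range m, Z ^ (j + 2) = Z ^ m - 1 := by
  induction m with
  | zero => simp
  | succ m ih =>
    rw [sum_range_succ, mul_add, ih]
    linear_combination -Z ^ m * h

theorem mul_sum_pow_add_one {R : Type*} [CommRing R] {y Z : R} (h : Z * (1 - y) = 1) (m : ℕ) :
    y * ∑ j ∈ range m, Z ^ (j + 1) = Z ^ m - 1 := by
  induction m with
  | zero => simp
  | succ m ih =>
    rw [sum_range_succ, mul_add, ih]
    linear_combination -Z ^ m * h

theorem classGF_mul_frontGF_one (m : ℕ) : 𝐠 * 𝐋 ^ m * frontGF 1 = 𝐂 * 𝐋 ^ (m + 1) := by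
  have hfront : frontGF 1 = 𝐂 * 𝐋 * (1 - X * 𝐋) := by
    simp only [frontGF]
    linear_combination -iteratedCatalanGF_eq
  rw [hfront]
  linear_combination 𝐂 * 𝐋 ^ (m + 1) * classGF_mul

theorem topGF_mul_eq : 𝐫 * (1 - X - X * 𝐋) = 1 - X * 𝐋 := by
  linear_combination (1 - X * 𝐋) * topGF_mul + X * 𝐫 * classGF_mul

theorem catalanGF_mul_iteratedCatalanGF_mul : 𝐂 * 𝐋 * (1 - X * 𝐂 - X * 𝐋) = 1 := by
  linear_combination 𝐋 * catalanGF_eq + iteratedCatalanGF_eq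

theorem catalanGF_pow_three_mul :
    𝐂 ^ 3 * 𝐋 * ((1 - X * 𝐂) * (1 - X - X * 𝐋) - X * (1 - X * 𝐋)) = 1 := by
  linear_combination (𝐂 ^ 2 * 𝐋 * (1 - X - X * 𝐋) + 𝐂 * 𝐋 * (1 - X * 𝐋)) * catalanGF_eq +
    catalanGF_mul_iteratedCatalanGF_mul

theorem frontGF_increment_mul :
    (𝐂 - 1) * (𝐋 - 1) * (1 - X * 𝐂 - X * 𝐫) = X * 𝐋 * (𝐫 - 1) := by
  have hunit : 𝐠 * 𝐫 * (1 - X - X * 𝐋) = 1 := by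
    linear_combination 𝐠 * topGF_mul_eq + classGF_mul
  have hfactor : (𝐂 - 1) * (𝐋 - 1) = X ^ 2 * 𝐂 ^ 3 * 𝐋 ^ 2 := by
    linear_combination (𝐋 - 1) * catalanGF_eq + X * 𝐂 ^ 2 * iteratedCatalanGF_eq
  have hcleared : (𝐂 - 1) * (𝐋 - 1) * ((1 - X * 𝐂) * (1 - X - X * 𝐋) - X * (1 - X * 𝐋)) =
      X ^ 2 * 𝐋 := by
    rw [hfactor]
    linear_combination X ^ 2 * 𝐋 * catalanGF_pow_three_mul
  refine (IsUnit.of_mul_eq_one_right _ hunit).mul_right_cancel ?_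
  linear_combination hcleared - X * ((𝐂 - 1) * (𝐋 - 1) + 𝐋) * topGF_mul_eq

theorem X_mul_frontGF_add_two (d : ℕ) :
    X * frontGF (d + 2) = frontGF (d + 1) - frontGF d - X * 𝐋 * (𝐫 ^ (d + 1) - 𝐫 ^ d) := by
  simp only [frontGF]
  linear_combination (-frontGF d) * catalanGF_eq - 𝐫 ^ d * frontGF_increment_mul

theorem X_mul_sum_frontGF (d : ℕ) :
    X * ∑ e ∈ range (d + 1), frontGF (e + 1) =
      X * frontGF 1 + frontGF d - 1 - X * 𝐋 * (𝐫 ^ d - 1) := by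
  induction d with
  | zero => simp [frontGF]
  | succ d ih =>
    rw [sum_range_succ, mul_add, ih, X_mul_frontGF_add_two]
    ring

/-! ### The generating tree of `Av(4321, 4213)` -/

/-- The class `Av(4321, 4213)`. -/
def InFirstClass ⦃n : ℕ⦄ (π : Equiv.Perm (Fin n)) : Prop :=
  Pattern.Avoids π p4321 ∧ Pattern.Avoids π p4213

/-- The values of `π` below `h` contain neither 321 nor 213, that is, whatever follows a descent
completes it to a 312. -/
def AvoidsBelow (π : Equiv.Perm (Fin n)) (h : ℕ) : Prop :=
  ∀ ⦃x y z⦄, Before π x y → Before π y z → y < x → x < h → z < h → y < z ∧ z < x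

/-- The values below `w` form the longest initial window of values in which `π` contains neither
321 nor 213, and the values below `m` are an increasing part of this window. -/
structure IsWindow (π : Equiv.Perm (Fin n)) (m w : ℕ) : Prop where
  run_le : m ≤ w
  le_length : w ≤ n
  incr {x y : ℕ} : x < y → y < m → Before π x y
  avoidsBelow : AvoidsBelow π w
  maximal : w < n → ¬ AvoidsBelow π (w + 1)

/-- The labels of the generating tree of `Av(4321, 4213)`. In `inside d m` the window consists of an
increasing run of the values below `m` and `d` further values, the least of which stands inside the
run. In `front d m` the run has length `m + 1` and the `d` further values precede it. -/
inductive WindowLabel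
  | inside (d m : ℕ)
  | front (d m : ℕ)

/-- The succession rule of `Av(4321, 4213)`. The children are listed by the height of the new first
entry: at the bottom, inside the run, directly above the run, above a further value. -/
def windowChildren : WindowLabel → Multiset WindowLabel
  | .inside d m => {.inside d (m + 1)} + (Multiset.range m).map (fun j => .front 1 j) +
      (Multiset.range d).map (fun e => .inside (e + 1) m)
  | .front d m => {.inside d (m + 2)} + (Multiset.range m).map (fun j => .front 1 j) +
      {.front (d + 1) m} + (Multiset.range d).map (fun e => .front (e + 1) m)

/-- `π` carries the given label. Under `inside d m` with `m = n`, `π` is the identity. -/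
def HasWindowLabel : WindowLabel → ∀ ⦃n : ℕ⦄, Equiv.Perm (Fin n) → Prop
  | .inside d m, n, π => IsWindow π m (m + d) ∧
      (m < n → 0 < d ∧ Before π 0 m ∧ Before π m (m - 1))
  | .front d m, _, π => IsWindow π (m + 1) (m + 1 + d) ∧ 0 < d ∧
      ∀ x, m + 1 ≤ x → x < m + 1 + d → Before π x 0

/-- The generating function of the subtree below a label of `Av(4321, 4213)`. -/
noncomputable def windowWeight : WindowLabel → ℤ⟦X⟧
  | .inside d m => 𝐠 * 𝐋 ^ m * 𝐫 ^ d
  | .front d m => 𝐠 * 𝐋 ^ (m + 1) * frontGF d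

theorem isWeight_windowWeight : IsWeight windowChildren windowWeight := by
  have hruns (m : ℕ) := mul_sum_pow_add_two iteratedCatalanGF_eq m
  rintro (⟨d, m⟩ | ⟨d, m⟩)
  · have htop := mul_sum_pow_add_one topGF_mul d
    simp only [windowChildren, windowWeight, Multiset.map_add, Multiset.map_map,
      Multiset.map_singleton, Multiset.sum_add, Multiset.sum_singleton, Function.comp_def,
      classGF_mul_frontGF_one, ← Finset.range_val, ← Finset.sum_eq_multiset_sum, ← mul_sum]
    linear_combination 𝐋 ^ m * 𝐫 ^ d * classGF_mul - hruns m - 𝐋 ^ m * htop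
  · have hfront := X_mul_sum_frontGF d
    have hone := classGF_mul_frontGF_one (m + 1)
    rw [sum_range_succ] at hfront
    simp only [windowChildren, windowWeight, Multiset.map_add, Multiset.map_map,
      Multiset.map_singleton, Multiset.sum_add, Multiset.sum_singleton, Function.comp_def,
      classGF_mul_frontGF_one, ← Finset.range_val, ← Finset.sum_eq_multiset_sum, ← mul_sum]
    linear_combination -hruns m - 𝐠 * 𝐋 ^ (m + 1) * hfront - X * hone +
      𝐋 ^ m * iteratedCatalanGF_eq + 𝐋 ^ (m + 1) * classGF_mul

section Window

variable {π : Equiv.Perm (Fin n)} {d h m v w : ℕ}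

theorem AvoidsBelow.mono (hπ : AvoidsBelow π h) (hw : w ≤ h) : AvoidsBelow π w :=
  fun _ _ _ hxy hyz hlt hx hz => hπ hxy hyz hlt (hx.trans_le hw) (hz.trans_le hw)

theorem not_completesPattern_iff_avoidsBelow :
    ¬ CompletesPattern π v p4321 ∧ ¬ CompletesPattern π v p4213 ↔ AvoidsBelow π v := by
  rw [completesPattern_p4321_iff, completesPattern_p4213_iff]
  constructor
  · rintro ⟨h321, h213⟩ x y z hxy hyz hlt hx hz
    by_contra hcon
    rcases lt_or_ge z y with hzy | hyz'
    · exact h321 ⟨x, y, z, hxy, hyz, hzy, hlt, hx⟩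
    · have := hyz.ne
      have := (hxy.trans hyz).ne
      exact h213 ⟨x, y, z, hxy, hyz, hlt, by omega, hz⟩
  · refine fun hπ => ⟨?_, ?_⟩
    · rintro ⟨x, y, z, hxy, hyz, hzy, hlt, hx⟩
      exact hzy.not_gt (hπ hxy hyz hlt hx (hzy.trans (hlt.trans hx))).1
    · rintro ⟨x, y, z, hxy, hyz, hlt, hxz, hz⟩
      exact hxz.not_gt (hπ hxy hyz hlt (hxz.trans hz) hz).2

theorem inFirstClass_prepend_iff (hv : v ≤ n) :
    InFirstClass (prepend π v) ↔ InFirstClass π ∧ AvoidsBelow π v := by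
  rw [InFirstClass, avoids_prepend_iff hv, avoids_prepend_iff hv,
    ← not_completesPattern_iff_avoidsBelow]
  exact and_and_and_comm

theorem avoidsBelow_prepend_of_le (hv : v ≤ n) (hh : h ≤ v) (hπ : AvoidsBelow π h) :
    AvoidsBelow (prepend π v) h := by
  intro x y z hxy hyz hlt hx hz
  rw [before_prepend_of_lt hv (by omega) (by omega)] at hxy hyz
  exact hπ hxy hyz hlt hx hz

theorem avoidsBelow_prepend_succ_iff (hv : v ≤ n) (hvh : v ≤ h) :
    AvoidsBelow (prepend π v) (h + 1) ↔
      AvoidsBelow π h ∧ ∀ ⦃y z⦄, Before π y z → y < v → z < h → y < z ∧ z < v := by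
  constructor
  · refine fun hp => ⟨fun x y z hxy hyz hlt hx hz => ?_, fun y z hyz hy hz => ?_⟩
    · have := hp ((before_prepend_raise hv).2 hxy) ((before_prepend_raise hv).2 hyz)
        (raise_strictMono v hlt) ((raise_lt_succ_iff hvh).2 hx) ((raise_lt_succ_iff hvh).2 hz)
      simpa only [(raise_strictMono v).lt_iff_lt] using this
    · have := hp (before_prepend_self hv ((raise_lt_iff.2 hy).le.trans hv) (raise_ne v y))
        ((before_prepend_raise hv).2 hyz) (raise_lt_iff.2 hy) (by omega)
        ((raise_lt_succ_iff hvh).2 hz)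
      simpa only [(raise_strictMono v).lt_iff_lt, raise_lt_iff] using this
  · rintro ⟨hπ, hnew⟩ x y z hxy hyz hlt hx hz
    have hyv : y ≠ v := by
      rintro rfl
      exact hxy.not_before (before_prepend_self hv (Nat.le_of_lt_succ hxy.left_lt) hlt.ne')
    obtain rfl | ⟨b, c, hbc, rfl, rfl⟩ := hyz.exists_of_prepend hv
    · exact absurd rfl hyv
    rw [raise_lt_succ_iff hvh] at hz
    obtain rfl | ⟨a, b', hab, rfl, hb⟩ := hxy.exists_of_prepend hv
    · rw [raise_lt_iff] at hlt
      simpa only [(raise_strictMono x).lt_iff_lt, raise_lt_iff] using hnew hbc hlt hz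
    · obtain rfl := (raise_strictMono v).injective hb
      rw [raise_lt_succ_iff hvh] at hx
      rw [(raise_strictMono v).lt_iff_lt] at hlt
      simpa only [(raise_strictMono v).lt_iff_lt] using hπ hab hbc hlt hx hz

theorem IsWindow.inFirstClass_prepend_iff (hw : IsWindow π m w) (hπ : InFirstClass π)
    (hv : v ≤ n) : InFirstClass (prepend π v) ↔ v ≤ w := by
  rw [Wilf.inFirstClass_prepend_iff hv]
  constructor
  · rintro ⟨-, hbelow⟩
    by_contra hlt
    exact hw.maximal (by omega) (hbelow.mono (by omega))
  · exact fun h => ⟨hπ, hw.avoidsBelow.mono h⟩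

theorem IsWindow.childPerms_eq (hw : IsWindow π m w) (hπ : InFirstClass π) :
    childPerms InFirstClass π = (Multiset.range (w + 1)).map (prepend π) := by
  rw [Wilf.childPerms_eq (S := range (w + 1)) fun v => ?_, range_val]
  rw [mem_range, Nat.lt_succ_iff]
  constructor
  · intro h
    have hvn := h.trans hw.le_length
    exact ⟨hvn, (hw.inFirstClass_prepend_iff hπ hvn).2 h⟩
  · exact fun h => (hw.inFirstClass_prepend_iff hπ h.1).1 h.2

theorem IsWindow.lt_of_before {y z : ℕ} (hw : IsWindow π m w) (hyz : Before π y z) (hy : y < m) :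
    y < z :=
  lt_of_not_ge fun hzy => hyz.not_before (hw.incr (hzy.lt_of_ne hyz.ne.symm) hy)

theorem IsWindow.prepend_zero (hw : IsWindow π m w) : IsWindow (prepend π 0) (m + 1) (w + 1) where
  run_le := Nat.succ_le_succ hw.run_le
  le_length := Nat.succ_le_succ hw.le_length
  incr {x y} hxy hy := by
    have := hw.run_le
    have := hw.le_length
    obtain rfl | hx := x.eq_zero_or_pos
    · exact before_prepend_self n.zero_le (by omega) hxy.ne'
    · obtain ⟨a, rfl⟩ := exists_raise_eq (v := 0) hx.ne'
      obtain ⟨b, rfl⟩ := exists_raise_eq (v := 0) (by omega : y ≠ 0)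
      rw [raise_lt_succ_iff m.zero_le] at hy
      rw [(raise_strictMono 0).lt_iff_lt] at hxy
      exact (before_prepend_raise n.zero_le).2 (hw.incr hxy hy)
  avoidsBelow := (avoidsBelow_prepend_succ_iff n.zero_le w.zero_le).2
    ⟨hw.avoidsBelow, fun _ _ _ hy => absurd hy (Nat.not_lt_zero _)⟩
  maximal hlt hbelow := hw.maximal (Nat.succ_lt_succ_iff.1 hlt)
    ((avoidsBelow_prepend_succ_iff n.zero_le (w + 1).zero_le).1 hbelow).1

theorem IsWindow.prepend_in_run (hw : IsWindow π m w) (hv : v ≤ m) (hnext : v < n → Before π 0 v) :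
    IsWindow (prepend π v) v (v + 1) := by
  have hvn : v ≤ n := hv.trans (hw.run_le.trans hw.le_length)
  refine ⟨v.le_succ, Nat.succ_le_succ hvn, fun hxy hy => ?_, ?_, fun hlt hbelow => ?_⟩
  · exact (before_prepend_of_lt hvn (hxy.trans hy) hy).2 (hw.incr hxy (hy.trans_le hv))
  · refine (avoidsBelow_prepend_succ_iff hvn le_rfl).2
      ⟨hw.avoidsBelow.mono (hv.trans hw.run_le), fun y z hyz hy hz =>
        ⟨hw.lt_of_before hyz (hy.trans_le hv), hz⟩⟩
  · have hv0 := hnext (Nat.succ_lt_succ_iff.1 hlt)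
    exact (((avoidsBelow_prepend_succ_iff hvn v.le_succ).1 hbelow).2 hv0
      (Nat.pos_of_ne_zero hv0.ne.symm) v.lt_succ_self).2.false

theorem IsWindow.prepend_above_descent {y z : ℕ} (hw : IsWindow π m w) (hmv : m ≤ v) (hvw : v ≤ w)
    (hyz : Before π y z) (hzy : z < y) (hy : y < v) : IsWindow (prepend π v) m v := by
  have hvn : v ≤ n := hvw.trans hw.le_length
  refine ⟨hmv, hvn.trans n.le_succ, fun hxy hy => ?_, ?_, fun _ hbelow => ?_⟩
  · exact (before_prepend_of_lt hvn (by omega) (by omega)).2 (hw.incr hxy hy)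
  · exact avoidsBelow_prepend_of_le hvn le_rfl (hw.avoidsBelow.mono hvw)
  · exact hzy.not_gt
      (((avoidsBelow_prepend_succ_iff hvn le_rfl).1 hbelow).2 hyz hy (hzy.trans hy)).1

theorem IsWindow.prepend_above_run (hw : IsWindow π m w)
    (hfront : ∀ x, m ≤ x → x < w → Before π x 0) : IsWindow (prepend π m) m (w + 1) := by
  have hmn : m ≤ n := hw.run_le.trans hw.le_length
  refine ⟨hw.run_le.trans w.le_succ, Nat.succ_le_succ hw.le_length, fun hxy hy => ?_, ?_,
    fun hlt hbelow => ?_⟩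
  · exact (before_prepend_of_lt hmn (hxy.trans hy) hy).2 (hw.incr hxy hy)
  · refine (avoidsBelow_prepend_succ_iff hmn hw.run_le).2
      ⟨hw.avoidsBelow, fun y z hyz hy hz => ?_⟩
    have hzm : z < m := by
      by_contra! hmz
      obtain rfl | hy0 := y.eq_zero_or_pos
      · exact hyz.not_before (hfront z hmz hz)
      · exact hyz.not_before ((hfront z hmz hz).trans (hw.incr hy0 hy))
    exact ⟨hw.lt_of_before hyz hy, hzm⟩
  · exact hw.maximal (Nat.succ_lt_succ_iff.1 hlt)
      ((avoidsBelow_prepend_succ_iff hmn (hw.run_le.trans w.le_succ)).1 hbelow).1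

theorem HasWindowLabel.front_one (hw : IsWindow π m w) (hv : v < m)
    (hnext : v + 1 < n → Before π 0 (v + 1)) : HasWindowLabel (.front 1 v) (prepend π (v + 1)) := by
  have hvn : v + 1 ≤ n := Nat.succ_le_of_lt hv |>.trans (hw.run_le.trans hw.le_length)
  refine ⟨hw.prepend_in_run hv hnext, one_pos, fun x hx hx' => ?_⟩
  obtain rfl : x = v + 1 := by omega
  exact before_prepend_self hvn n.zero_le (by omega)

theorem HasWindowLabel.inside_prepend_zero (hπ : HasWindowLabel (.inside d m) π) :
    HasWindowLabel (.inside d (m + 1)) (prepend π 0) := by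
  obtain ⟨hw, hmid⟩ := hπ
  refine ⟨add_right_comm m d 1 ▸ hw.prepend_zero, fun hlt => ?_⟩
  obtain ⟨hd, hzero, hlast⟩ := hmid (Nat.succ_lt_succ_iff.1 hlt)
  refine ⟨hd, before_prepend_self n.zero_le (by omega) (by omega), ?_⟩
  have := hzero.ne
  have h := (before_prepend_raise n.zero_le).2 hlast
  rwa [raise_of_le m.zero_le, raise_of_le (m - 1).zero_le, show m - 1 + 1 = m + 1 - 1 by omega] at h

theorem HasWindowLabel.inside_prepend_above {e : ℕ} (hπ : HasWindowLabel (.inside d m) π)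
    (he : e < d) : HasWindowLabel (.inside (e + 1) m) (prepend π (m + (e + 1))) := by
  obtain ⟨hw, hmid⟩ := hπ
  have hwn := hw.le_length
  obtain ⟨-, hzero, hlast⟩ := hmid (by omega)
  have := hzero.ne
  refine ⟨hw.prepend_above_descent (by omega) (by omega) hlast (by omega) (by omega), fun _ => ?_⟩
  rw [before_prepend_of_lt (by omega) (by omega) (by omega),
    before_prepend_of_lt (by omega) (by omega) (by omega)]
  exact ⟨e.succ_pos, hzero, hlast⟩

theorem HasWindowLabel.front_prepend_zero (hπ : HasWindowLabel (.front d m) π) :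
    HasWindowLabel (.inside d (m + 2)) (prepend π 0) := by
  obtain ⟨hw, hd, hfront⟩ := hπ
  refine ⟨add_right_comm (m + 1) d 1 ▸ hw.prepend_zero, fun hlt =>
    ⟨hd, before_prepend_self n.zero_le (by omega) (by omega), ?_⟩⟩
  have hlast : Before π (m + 1) m := by
    have h := hfront (m + 1) le_rfl (by omega)
    obtain rfl | hm := m.eq_zero_or_pos
    · exact h
    · exact h.trans (hw.incr hm m.lt_succ_self)
  have h := (before_prepend_raise n.zero_le).2 hlast
  rwa [raise_of_le (m + 1).zero_le, raise_of_le m.zero_le] at h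

theorem HasWindowLabel.front_prepend_above_run (hπ : HasWindowLabel (.front d m) π) :
    HasWindowLabel (.front (d + 1) m) (prepend π (m + 1)) := by
  obtain ⟨hw, -, hfront⟩ := hπ
  have hwn := hw.le_length
  refine ⟨hw.prepend_above_run hfront, d.succ_pos, fun x hx hx' => ?_⟩
  obtain rfl | hlt := hx.eq_or_lt
  · exact before_prepend_self (by omega) n.zero_le (by omega)
  · obtain ⟨a, rfl⟩ := exists_raise_eq hlt.ne'
    rw [lt_raise_iff] at hlt
    have ha : a < m + 1 + d := (raise_lt_succ_iff hw.run_le).1 hx'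
    have h := (before_prepend_raise (hw.run_le.trans hwn)).2 (hfront a hlt ha)
    rwa [raise_of_lt m.succ_pos] at h

theorem HasWindowLabel.front_prepend_above {e : ℕ} (hπ : HasWindowLabel (.front d m) π)
    (he : e < d) : HasWindowLabel (.front (e + 1) m) (prepend π (m + 1 + (e + 1))) := by
  obtain ⟨hw, -, hfront⟩ := hπ
  have hwn := hw.le_length
  refine ⟨hw.prepend_above_descent (by omega) (by omega) (hfront (m + 1) le_rfl (by omega))
    m.succ_pos (by omega), e.succ_pos, fun x hx hx' => ?_⟩
  rw [before_prepend_of_lt (by omega) hx' (by omega)]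
  exact hfront x hx (by omega)

theorem rel_childPerms_inside (hmem : InFirstClass π) (hπ : HasWindowLabel (.inside d m) π) :
    Multiset.Rel (fun τ ℓ => HasWindowLabel ℓ τ) (childPerms InFirstClass π)
      (windowChildren (.inside d m)) := by
  have hw := hπ.1
  rw [hw.childPerms_eq hmem, map_range_succ, map_range_add, ← add_assoc]
  refine .add (.add ?_ (rel_map_range fun j hj => .front_one hw hj fun hn => ?_))
    (rel_map_range fun e he => hπ.inside_prepend_above he)
  · exact .cons hπ.inside_prepend_zero .zero
  · obtain rfl | hlt := (Nat.succ_le_of_lt hj).eq_or_lt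
    · exact (hπ.2 hn).2.1
    · exact hw.incr j.succ_pos hlt

theorem rel_childPerms_front (hmem : InFirstClass π) (hπ : HasWindowLabel (.front d m) π) :
    Multiset.Rel (fun τ ℓ => HasWindowLabel ℓ τ) (childPerms InFirstClass π)
      (windowChildren (.front d m)) := by
  have hw := hπ.1
  rw [hw.childPerms_eq hmem, map_range_succ, map_range_add, Multiset.range_succ, Multiset.map_cons,
    ← Multiset.singleton_add, add_comm {prepend π (m + 1)}, ← add_assoc, ← add_assoc]
  refine .add (.add (.add ?_ (rel_map_range fun j hj => ?_)) ?_)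
    (rel_map_range fun e he => hπ.front_prepend_above he)
  · exact .cons hπ.front_prepend_zero .zero
  · exact .front_one hw (by omega) fun _ => hw.incr j.succ_pos (by omega)
  · exact .cons hπ.front_prepend_above_run .zero

theorem followsRule_windowChildren :
    FollowsRule InFirstClass HasWindowLabel windowChildren (.inside 0 0) where
  empty_mem _ := ⟨fun ⟨α, _⟩ => (α 0).elim0, fun ⟨α, _⟩ => (α 0).elim0⟩
  empty_state _ := by
    refine ⟨⟨le_rfl, le_rfl, ?_, ?_, ?_⟩, fun h => absurd h (lt_irrefl 0)⟩
    · exact fun _ hy => absurd hy (Nat.not_lt_zero _)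
    · exact fun x _ _ _ _ _ hx => absurd hx x.not_lt_zero
    · exact fun h => absurd h (lt_irrefl 0)
  tail_mem hv hmem := ((inFirstClass_prepend_iff hv).1 hmem).1
  step {_ _ ℓ} hmem hπ :=
    match ℓ with
    | .inside _ _ => rel_childPerms_inside hmem hπ
    | .front _ _ => rel_childPerms_front hmem hπ

end Window

theorem card_firstClass (n : ℕ) :
    (Nat.card {π : Equiv.Perm (Fin n) // InFirstClass π} : ℤ) = coeff n 𝐠 := by
  rw [followsRule_windowChildren.card_eq_coeff isWeight_windowWeight]
  simp [windowWeight]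

/-! ### The generating tree of `Av(2413, 2431, 23154)` -/

/-- The class `Av(2413, 2431, 23154)`. -/
def InSecondClass ⦃n : ℕ⦄ (π : Equiv.Perm (Fin n)) : Prop :=
  Pattern.Avoids π p2413 ∧ Pattern.Avoids π p2431 ∧ Pattern.Avoids π p23154

/-- The values of `π` from `v` on stand in increasing order. -/
def IncrAbove (π : Equiv.Perm (Fin n)) (v : ℕ) : Prop :=
  ∀ ⦃x y⦄, v ≤ x → x < y → y < n → Before π x y

/-- All values of `π` below `v` stand to the left of all other values, that is, `π` is a direct sum
whose first summand has length `v`. -/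
def IsCut (π : Equiv.Perm (Fin n)) (v : ℕ) : Prop :=
  ∀ ⦃x y⦄, x < v → v ≤ y → y < n → Before π x y

/-- The values from `k` on form the longest increasing run of top values of `π`, and `π` is not the
identity. -/
structure IsTopRun (π : Equiv.Perm (Fin n)) (k : ℕ) : Prop where
  pos : 0 < k
  lt : k < n
  incrAbove : IncrAbove π k
  descent : Before π k (k - 1)

open Classical in
/-- The cuts of `π` below `k`, including the trivial cut `0`. -/
noncomputable def cuts (π : Equiv.Perm (Fin n)) (k : ℕ) : Finset ℕ :=
  (range k).filter (IsCut π)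

/-- The labels of the generating tree of `Av(2413, 2431, 23154)`: the identity of length `m`, and
the permutations whose longest increasing run of top values has length `m`, with `s` cuts below
this run. -/
inductive CutLabel
  | identity (m : ℕ)
  | topRun (m s : ℕ)

/-- The succession rule of `Av(2413, 2431, 23154)`. The new first entry is either a cut or at least
the least value of the top run. -/
def cutChildren : CutLabel → Multiset CutLabel
  | .identity m => {.identity (m + 1)} + (Multiset.range m).map (fun j => .topRun (m - j) 1)
  | .topRun m s => (Multiset.range s).map (fun j => .topRun m (j + 2)) +
      (Multiset.range (m + 1)).map (fun j => .topRun (m + 1 - j) 1)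

/-- `π` carries the given label. -/
def HasCutLabel : CutLabel → ∀ ⦃n : ℕ⦄, Equiv.Perm (Fin n) → Prop
  | .identity m, n, π => m = n ∧ IncrAbove π 0
  | .topRun m s, n, π => ∃ k, k + m = n ∧ IsTopRun π k ∧ #(cuts π k) = s

/-- The generating function of the subtree below a label of `Av(2413, 2431, 23154)`. -/
noncomputable def cutWeight : CutLabel → ℤ⟦X⟧
  | .identity m => 𝐠 * 𝐋 ^ m
  | .topRun m s => 𝐂 ^ s * 𝐋 ^ (m + 1)

theorem sum_range_pow_sub_add_one {R : Type*} [Semiring R] (Z : R) (m : ℕ) :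
    ∑ j ∈ range m, Z ^ (m - j + 1) = ∑ j ∈ range m, Z ^ (j + 2) := by
  rw [← sum_range_reflect]
  refine sum_congr rfl fun j hj => ?_
  have := mem_range.1 hj
  rw [show m - (m - 1 - j) + 1 = j + 2 by omega]

theorem isWeight_cutWeight : IsWeight cutChildren cutWeight := by
  have hruns (m : ℕ) := mul_sum_pow_add_two iteratedCatalanGF_eq m
  rintro (m | ⟨m, s⟩)
  · simp only [cutChildren, cutWeight, Multiset.map_add, Multiset.map_map,
      Multiset.map_singleton, Multiset.sum_add, Multiset.sum_singleton, Function.comp_def,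
      ← Finset.range_val, ← Finset.sum_eq_multiset_sum, ← mul_sum, sum_range_pow_sub_add_one]
    linear_combination 𝐋 ^ m * classGF_mul - hruns m
  · have hcuts := mul_sum_pow_add_two catalanGF_eq s
    simp only [cutChildren, cutWeight, Multiset.map_add, Multiset.map_map, Multiset.sum_add,
      Function.comp_def, ← Finset.range_val, ← Finset.sum_eq_multiset_sum, ← mul_sum, ← sum_mul,
      sum_range_pow_sub_add_one]
    linear_combination -hruns (m + 1) - 𝐋 ^ (m + 1) * hcuts

section Cut

variable {π : Equiv.Perm (Fin n)} {k m s u v : ℕ}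

theorem IncrAbove.mono (h : IncrAbove π k) (hkv : k ≤ v) : IncrAbove π v :=
  fun _ _ hx => h (hkv.trans hx)

theorem IncrAbove.lt_of_before {x y : ℕ} (h : IncrAbove π v) (hxy : Before π x y) (hy : v ≤ y) :
    x < y :=
  lt_of_not_ge fun hyx => hxy.not_before (h hy (hyx.lt_of_ne hxy.ne.symm) hxy.left_lt)

theorem IsCut.le_of_before {x y : ℕ} (h : IsCut π v) (hxy : Before π x y) (hx : v ≤ x) : v ≤ y :=
  le_of_not_gt fun hy => hxy.not_before (h hy hx hxy.left_lt)

/-- A descent above `v` and an inversion across `v` would together complete one of the patterns. -/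
theorem incrAbove_or_isCut (h2413 : ¬ CompletesPattern π v p2413)
    (h2431 : ¬ CompletesPattern π v p2431) (h23154 : ¬ CompletesPattern π v p23154) :
    IncrAbove π v ∨ IsCut π v := by
  rw [completesPattern_p2413_iff] at h2413
  rw [completesPattern_p2431_iff] at h2431
  rw [completesPattern_p23154_iff] at h23154
  by_contra hcon
  simp only [IncrAbove, IsCut, not_or, not_forall] at hcon
  obtain ⟨⟨d, e, hd, hde, he, hnot_de⟩, a, c, ha, hc, hcn, hnot_ac⟩ := hcon
  have hed : Before π e d := (before_or_before he (hde.trans he) hde.ne').resolve_right hnot_de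
  have hca : Before π c a :=
    (before_or_before hcn (by omega) (by omega)).resolve_right hnot_ac
  obtain hea | hae := before_or_before (π := π) he hca.right_lt (by omega)
  · obtain hda | had := before_or_before (π := π) hed.right_lt hca.right_lt (by omega)
    · exact h2431 ⟨e, d, a, hed, hda, ha, hd, hde⟩
    · exact h2413 ⟨e, a, d, hea, had, ha, hd, hde⟩
  · have had := hae.trans hed
    rcases lt_trichotomy c d with hcd | rfl | hdc
    · exact h23154 ⟨c, a, e, d, hca, hae, hed, ha, hc, hcd, hde⟩
    · exact had.not_before hca
    · exact h2413 ⟨c, a, d, hca, had, ha, hd, hdc⟩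

theorem IncrAbove.not_completesPattern (h : IncrAbove π v) :
    ¬ CompletesPattern π v p2413 ∧ ¬ CompletesPattern π v p2431 ∧
      ¬ CompletesPattern π v p23154 := by
  rw [completesPattern_p2413_iff, completesPattern_p2431_iff, completesPattern_p23154_iff]
  refine ⟨?_, ?_, ?_⟩
  · rintro ⟨a, b, c, hab, hbc, -, hvc, hca⟩
    exact hca.not_gt (h.lt_of_before (hab.trans hbc) hvc)
  · rintro ⟨a, b, c, hab, -, -, hvb, hba⟩
    exact hba.not_gt (h.lt_of_before hab hvb)
  · rintro ⟨a, b, c, d, -, -, hcd, -, hva, had, hdc⟩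
    exact hdc.not_gt (h.lt_of_before hcd (hva.trans had.le))

theorem IsCut.not_completesPattern (h : IsCut π v) :
    ¬ CompletesPattern π v p2413 ∧ ¬ CompletesPattern π v p2431 ∧
      ¬ CompletesPattern π v p23154 := by
  rw [completesPattern_p2413_iff, completesPattern_p2431_iff, completesPattern_p23154_iff]
  refine ⟨?_, ?_, ?_⟩
  · rintro ⟨a, b, c, hab, -, hbv, hvc, hca⟩
    exact hbv.not_ge (h.le_of_before hab (hvc.trans hca.le))
  · rintro ⟨a, b, c, -, hbc, hcv, hvb, -⟩
    exact hcv.not_ge (h.le_of_before hbc hvb)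
  · rintro ⟨a, b, c, d, hab, -, -, hbv, hva, -⟩
    exact hbv.not_ge (h.le_of_before hab hva)

theorem inSecondClass_prepend_iff (hv : v ≤ n) :
    InSecondClass (prepend π v) ↔ InSecondClass π ∧ (IncrAbove π v ∨ IsCut π v) := by
  simp only [InSecondClass, avoids_prepend_iff hv]
  constructor
  · rintro ⟨⟨h2413, c2413⟩, ⟨h2431, c2431⟩, h23154, c23154⟩
    exact ⟨⟨h2413, h2431, h23154⟩, incrAbove_or_isCut c2413 c2431 c23154⟩
  · rintro ⟨⟨h2413, h2431, h23154⟩, hfirst⟩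
    obtain ⟨c2413, c2431, c23154⟩ :=
      hfirst.elim IncrAbove.not_completesPattern IsCut.not_completesPattern
    exact ⟨⟨h2413, c2413⟩, ⟨h2431, c2431⟩, h23154, c23154⟩

theorem IncrAbove.prepend_self (hv : v ≤ n) (h : IncrAbove π v) : IncrAbove (prepend π v) v := by
  intro x y hx hxy hy
  obtain rfl | hlt := hx.eq_or_lt
  · exact before_prepend_self hv (Nat.le_of_lt_succ hy) hxy.ne'
  · obtain ⟨a, rfl⟩ := exists_raise_eq hlt.ne'
    obtain ⟨b, rfl⟩ := exists_raise_eq (hlt.trans hxy).ne'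
    rw [raise_lt_succ_iff hv] at hy
    exact (before_prepend_raise hv).2
      (h (lt_raise_iff.1 hlt) ((raise_strictMono v).lt_iff_lt.1 hxy) hy)

theorem IncrAbove.isTopRun_prepend (hv : 0 < v) (hvn : v ≤ n) (h : IncrAbove π v) :
    IsTopRun (prepend π v) v :=
  ⟨hv, Nat.lt_succ_of_le hvn, h.prepend_self hvn, before_prepend_self hvn (by omega) (by omega)⟩

theorem IsTopRun.le_of_incrAbove (h : IsTopRun π k) (hv : IncrAbove π v) : k ≤ v := by
  by_contra! hlt
  exact (hv.lt_of_before h.descent (by omega)).not_ge k.pred_le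

theorem IsTopRun.prepend_of_lt (h : IsTopRun π k) (hv : v < k) :
    IsTopRun (prepend π v) (k + 1) := by
  have hvn : v ≤ n := (hv.trans h.lt).le
  refine ⟨k.succ_pos, Nat.succ_lt_succ h.lt, fun x y hx hxy hy => ?_, ?_⟩
  · obtain ⟨a, rfl⟩ := exists_raise_eq (by omega : x ≠ v)
    obtain ⟨b, rfl⟩ := exists_raise_eq (by omega : y ≠ v)
    rw [raise_lt_succ_iff hvn] at hy
    have hka : k ≤ a := not_lt.1 fun ha => hx.not_gt ((raise_lt_succ_iff hv.le).2 ha)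
    exact (before_prepend_raise hvn).2 (h.incrAbove hka ((raise_strictMono v).lt_iff_lt.1 hxy) hy)
  · have hd := (before_prepend_raise hvn).2 h.descent
    rwa [raise_of_le hv.le, raise_of_le (by omega), show k - 1 + 1 = k + 1 - 1 by omega] at hd

theorem isCut_zero : IsCut π 0 := fun x _ hx => absurd hx x.not_lt_zero

theorem isCut_prepend_succ_iff (hv : v ≤ n) :
    IsCut (prepend π v) (u + 1) ↔ v ≤ u ∧ IsCut π u := by
  constructor
  · intro h
    have hvu : v ≤ u := by
      by_contra! huv
      exact (before_prepend_self hv n.zero_le (by omega)).not_before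
        (h u.succ_pos huv (Nat.lt_succ_of_le hv))
    refine ⟨hvu, fun x y hx hy hyn => (before_prepend_raise hv).1 (h ?_ ?_ ?_)⟩
    · exact (raise_lt_succ_iff hvu).2 hx
    · exact (raise_of_le (hvu.trans hy)).symm ▸ Nat.succ_le_succ hy
    · exact (raise_lt_succ_iff hv).2 hyn
  · rintro ⟨hvu, h⟩ x y hx hy hyn
    obtain rfl | hxv := eq_or_ne x v
    · exact before_prepend_self hv (Nat.le_of_lt_succ hyn) (by omega)
    · obtain ⟨a, rfl⟩ := exists_raise_eq hxv
      obtain ⟨b, rfl⟩ := exists_raise_eq (by omega : y ≠ v)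
      rw [raise_lt_succ_iff hvu] at hx
      rw [raise_lt_succ_iff hv] at hyn
      have hub : u ≤ b := not_lt.1 fun hb => hy.not_gt ((raise_lt_succ_iff hvu).2 hb)
      exact (before_prepend_raise hv).2 (h hx hub hyn)

theorem mem_cuts : u ∈ cuts π k ↔ u < k ∧ IsCut π u := by
  simp [cuts]

theorem card_cuts_prepend (hv : v ≤ n) (k : ℕ) :
    #(cuts (prepend π v) (k + 1)) = #((cuts π k).filter (v ≤ ·)) + 1 := by
  have hcuts : cuts (prepend π v) (k + 1) =
      insert 0 (((cuts π k).filter (v ≤ ·)).map (addRightEmbedding 1)) := by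
    ext u
    simp only [mem_cuts, mem_filter, mem_insert, mem_map, addRightEmbedding_apply]
    cases u with
    | zero => simp [isCut_zero]
    | succ u => simp [isCut_prepend_succ_iff hv, and_assoc, and_left_comm]
  rw [hcuts, card_insert_of_notMem (by simp), card_map]

theorem map_card_filter_le (S : Finset ℕ) :
    S.val.map (fun v => #(S.filter (v ≤ ·))) = (Multiset.range #S).map (· + 1) := by
  induction S using Finset.induction_on_min with
  | empty => simp
  | insert a S ha ih =>
    have hnot : a ∉ S := fun h => lt_irrefl _ (ha a h)
    rw [insert_val_of_notMem hnot, Multiset.map_cons, card_insert_of_notMem hnot,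
      Multiset.range_succ, Multiset.map_cons, ← ih]
    congr 1
    · rw [filter_true_of_mem, card_insert_of_notMem hnot]
      simpa using fun x hx => (ha x hx).le
    · refine Multiset.map_congr rfl fun v hv => ?_
      rw [filter_insert, if_neg (ha v hv).not_ge]

theorem IncrAbove.hasCutLabel_prepend (hv : 0 < v) (hm : v + m = n + 1) (hvn : v ≤ n)
    (h : IncrAbove π v) : HasCutLabel (.topRun m 1) (prepend π v) := by
  refine ⟨v, hm, h.isTopRun_prepend hv hvn, ?_⟩
  obtain ⟨k, rfl⟩ := Nat.exists_eq_succ_of_ne_zero hv.ne'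
  rw [card_cuts_prepend hvn, filter_false_of_mem, card_empty]
  intro u hu
  have := (mem_cuts.1 hu).1
  omega

theorem IsTopRun.hasCutLabel_prepend (h : IsTopRun π k) (hk : k + m = n) (hv : v < k) :
    HasCutLabel (.topRun m (#((cuts π k).filter (v ≤ ·)) + 1)) (prepend π v) :=
  ⟨k + 1, by omega, h.prepend_of_lt hv, card_cuts_prepend (hv.trans h.lt).le k⟩

theorem IsTopRun.childPerms_eq (h : IsTopRun π k) (hk : k + m = n) (hπ : InSecondClass π) :
    childPerms InSecondClass π =
      (cuts π k).val.map (prepend π) +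
        (Multiset.range (m + 1)).map (fun j => prepend π (k + j)) := by
  have hdisj : Disjoint (cuts π k) ((range (m + 1)).map (addLeftEmbedding k)) := by
    refine disjoint_left.2 fun u hu hmap => ?_
    obtain ⟨j, -, rfl⟩ := mem_map.1 hmap
    exact absurd (mem_cuts.1 hu).1 (k.le_add_right j).not_gt
  have hmem (v : ℕ) : v ∈ (cuts π k).disjUnion _ hdisj ↔ v ≤ n ∧ InSecondClass (prepend π v) := by
    rw [mem_disjUnion, mem_cuts, mem_map]
    constructor
    · rintro (⟨hv, hcut⟩ | ⟨j, hj, rfl⟩)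
      · have hvn := (hv.trans h.lt).le
        exact ⟨hvn, (inSecondClass_prepend_iff hvn).2 ⟨hπ, .inr hcut⟩⟩
      · have hvn : k + j ≤ n := by have := mem_range.1 hj; omega
        exact ⟨hvn, (inSecondClass_prepend_iff hvn).2
          ⟨hπ, .inl (h.incrAbove.mono (k.le_add_right j))⟩⟩
    · rintro ⟨hvn, hv⟩
      refine (lt_or_ge v k).imp (fun hvk => ⟨hvk, ?_⟩) fun hkv => ?_
      · exact ((inSecondClass_prepend_iff hvn).1 hv).2.resolve_left fun hincr =>
          hvk.not_ge (h.le_of_incrAbove hincr)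
      · exact ⟨v - k, mem_range.2 (by omega), Nat.add_sub_cancel' hkv⟩
  rw [Wilf.childPerms_eq hmem, disjUnion_val, Multiset.map_add, map_val, range_val,
    Multiset.map_map]
  rfl

theorem rel_childPerms_identity (hmem : InSecondClass π) (hπ : HasCutLabel (.identity m) π) :
    Multiset.Rel (fun τ ℓ => HasCutLabel ℓ τ) (childPerms InSecondClass π)
      (cutChildren (.identity m)) := by
  obtain ⟨rfl, hincr⟩ := hπ
  have hall (v : ℕ) : v ∈ range (m + 1) ↔ v ≤ m ∧ InSecondClass (prepend π v) := by
    rw [mem_range, Nat.lt_succ_iff]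
    exact ⟨fun hv => ⟨hv, (inSecondClass_prepend_iff hv).2 ⟨hmem, .inl (hincr.mono v.zero_le)⟩⟩,
      And.left⟩
  rw [childPerms_eq hall, range_val, map_range_succ]
  refine .add ?_ (rel_map_range fun j hj => ?_)
  · exact .cons ⟨rfl, hincr.prepend_self m.zero_le⟩ .zero
  · exact (hincr.mono (j + 1).zero_le).hasCutLabel_prepend j.succ_pos (by omega) hj

theorem rel_childPerms_topRun (hmem : InSecondClass π) (hπ : HasCutLabel (.topRun m s) π) :
    Multiset.Rel (fun τ ℓ => HasCutLabel ℓ τ) (childPerms InSecondClass π)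
      (cutChildren (.topRun m s)) := by
  obtain ⟨k, hk, hrun, rfl⟩ := hπ
  have hcuts : (Multiset.range #(cuts π k)).map (fun j => CutLabel.topRun m (j + 2)) =
      (cuts π k).val.map (fun v => .topRun m (#((cuts π k).filter (v ≤ ·)) + 1)) := by
    have h := congrArg (Multiset.map fun j => CutLabel.topRun m (j + 1))
      (map_card_filter_le (cuts π k))
    simpa only [Multiset.map_map, Function.comp_def] using h.symm
  rw [hrun.childPerms_eq hk hmem, cutChildren, hcuts]
  refine .add ?_ (rel_map_range fun j hj => ?_)
  · rw [Multiset.rel_map]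
    refine Multiset.rel_refl_of_refl_on fun v hv => hrun.hasCutLabel_prepend hk ?_
    exact (mem_cuts.1 hv).1
  · have := hrun.pos
    exact (hrun.incrAbove.mono (k.le_add_right j)).hasCutLabel_prepend (by omega) (by omega)
      (by omega)

theorem followsRule_cutChildren :
    FollowsRule InSecondClass HasCutLabel cutChildren (.identity 0) where
  empty_mem _ := ⟨fun ⟨α, _⟩ => (α 0).elim0, fun ⟨α, _⟩ => (α 0).elim0, fun ⟨α, _⟩ => (α 0).elim0⟩
  empty_state _ := ⟨rfl, fun _ y _ _ hy => absurd hy y.not_lt_zero⟩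
  tail_mem hv hmem := ((inSecondClass_prepend_iff hv).1 hmem).1
  step {_ _ ℓ} hmem hπ :=
    match ℓ with
    | .identity _ => rel_childPerms_identity hmem hπ
    | .topRun _ _ => rel_childPerms_topRun hmem hπ

end Cut

theorem card_secondClass (n : ℕ) :
    (Nat.card {π : Equiv.Perm (Fin n) // InSecondClass π} : ℤ) = coeff n 𝐠 := by
  rw [followsRule_cutChildren.card_eq_coeff isWeight_cutWeight]
  simp [cutWeight]

end Wilf

/-- the classes `Av(4321, 4213)` and `Av(2413, 2431, 23154)` are Wilf
equivalent. -/
theorem wilf_equivalence (n : ℕ) (hn : 1 ≤ n) :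
    Nat.card {π : Equiv.Perm (Fin n) // Pattern.Avoids π p4321 ∧ Pattern.Avoids π p4213}
      = Nat.card {π : Equiv.Perm (Fin n) //
          Pattern.Avoids π p2413 ∧ Pattern.Avoids π p2431 ∧ Pattern.Avoids π p23154} := by
  have hcard := (Wilf.card_firstClass n).trans (Wilf.card_secondClass n).symm
  exact_mod_cast hcard
end
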